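/- arXiv:1907.05658 — 2 statements merged into one kernel-verified Lean document; each statement's English description precedes it below -/
import Mathlib

section
/- Let N ∈ ℕ and C > 0, and for each j ∈ ℕ let a_j(y) = Σ_{m=0}^N a_{j,m}·e^{−2πi m y} be a trigonometric polynomial of degree at most N with a_j(0) = 1 and sup_{y∈ℝ}|a_j(y)| ≤ C. Let φ : ℝ → ℂ be continuous, integrable and compactly supported with linearly independent integer shifts and with φ̂(z) = Π_{j=1}^∞ a_j(2^{−j} z) for all z ∈ ℂ (pointwise limit of partial products). Let λ ∈ ℂ, d ∈ ℕ₀ with d ≤ N, let ω_0, …, ω_d : ℝ → ℂ be 1-periodic analytic functions with ω_d not identically zero, and let p_0, …, p_d be polynomials with deg(p_k) = k. If the analytic function g(t) = e^{λt} Σ_{k=0}^d p_k(t)·ω_k(t) belongs to V_φ, then the sequences { φ̂^{(k)}(−iλ/(2π) + ℓ) : ℓ ∈ ℤ }, k = 0, …, d, contain all together at most N nonzero elements. -/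
open MeasureTheory

/-- The Fourier transform of `φ`, analytically extended to `ℂ`:
`φ̂(z) = ∫_ℝ φ(x)·e^{−2πi x z} dx`. -/
noncomputable def fourierExt (φ : ℝ → ℂ) (z : ℂ) : ℂ :=
  ∫ x : ℝ, φ x * Complex.exp (-(2 * (Real.pi : ℂ) * Complex.I * (x : ℂ) * z))

/-!
Write `a_j(y) = P_j(e^{-2πiy})`. The partial products of `φ̂` grow polynomially, uniformly in their
length, so `φ̂` is a limit of trigonometric sums in the sense of tempered distributions. All factors
past the `j`-th together have frequencies in `[0, N 2^{-j}]` and the first `j` have frequencies in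
`2^{-j} ℤ`. Among `N + 1` translates by multiples of `2^{-j}` some nontrivial combination therefore
cancels the `N` frequencies that could contribute to the gap `(0, 2^{-j})`, so the same combination
of translates of any `g ∈ V_φ` vanishes there. If `g` is analytic, it vanishes everywhere: any
`N + 1` translates of `g` by dyadic rationals are linearly dependent.

After multiplication by `e^{-λt}`, finite differences and the linear independence of the shifts show
that the coefficients of `g` are the values of a polynomial `q` of degree `d`. By Poisson summation
the dependence of the translates by `s_0, …, s_N` passes to the values at `s_0, …, s_N` of the
exponential polynomials `s ↦ e^{-2πins} R(-s)`, where `R` is a derivative of the polynomial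
`w ↦ 𝓕(x ↦ q(w - x) e^{-λx} φ(x))(n)`. The order of the first nonvanishing derivative of `φ̂` at
`-iλ/(2π) + n` determines the degree of this polynomial, so `N + 1` nonzero derivatives would yield
`N + 1` linearly independent exponential polynomials. These remain independent on `N + 1` suitable
dyadic rationals, a contradiction.
-/

open Filter Topology Polynomial FourierTransform
open scoped Pointwise fwdDiff

/-! ### Trigonometric sums -/

/-- The pure wave `y ↦ e^{-2πi s y}` of frequency `s`; the sign is that of the Fourier kernel. -/
noncomputable def wave (s : ℝ) : ℝ → ℂ := fun y =>
  Complex.exp (-(2 * (Real.pi : ℂ) * Complex.I * (s : ℂ) * (y : ℂ)))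

lemma wave_eq_exp_ofReal_mul_I (s y : ℝ) :
    wave s y = Complex.exp (((-(2 * Real.pi * (s * y)) : ℝ) : ℂ) * Complex.I) := by
  rw [wave]
  congr 1
  push_cast
  ring

lemma wave_comm (s y : ℝ) : wave s y = wave y s := by
  simp only [wave_eq_exp_ofReal_mul_I, mul_comm]

lemma wave_zero : wave 0 = 1 := by
  funext y
  simp [wave]

lemma wave_add (s t : ℝ) : wave (s + t) = wave s * wave t := by
  funext y
  simp only [wave, Pi.mul_apply, ← Complex.exp_add]
  congr 1
  push_cast
  ring

lemma wave_natCast_mul (n : ℕ) (s : ℝ) : wave (n * s) = wave s ^ n := by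
  funext y
  simp only [wave, Pi.pow_apply, ← Complex.exp_nat_mul]
  congr 1
  push_cast
  ring

lemma norm_wave (s y : ℝ) : ‖wave s y‖ = 1 := by
  rw [wave_eq_exp_ofReal_mul_I, Complex.norm_exp_ofReal_mul_I]

lemma norm_wave_sub_one_le (s y : ℝ) : ‖wave s y - 1‖ ≤ 2 * Real.pi * |s * y| := by
  rw [wave_eq_exp_ofReal_mul_I, mul_comm]
  refine (Real.norm_exp_I_mul_ofReal_sub_one_le).trans_eq ?_
  rw [Real.norm_eq_abs, abs_neg, abs_mul, abs_of_pos Real.two_pi_pos]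

lemma continuous_wave (s : ℝ) : Continuous (wave s) := by
  unfold wave
  fun_prop

lemma wave_intCast_intCast (m n : ℤ) : wave m n = 1 := by
  rw [wave, Complex.exp_eq_one_iff]
  exact ⟨-(m * n), by push_cast; ring⟩

lemma fourier_eq_integral_wave_mul (f : ℝ → ℂ) (y : ℝ) : 𝓕 f y = ∫ x, wave y x * f x := by
  rw [Real.fourier_real_eq_integral_exp_smul]
  congr 1
  funext x
  rw [smul_eq_mul, wave]
  congr 2
  push_cast
  ring

lemma fourierExt_ofReal (f : ℝ → ℂ) (y : ℝ) : fourierExt f y = 𝓕 f y := by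
  simp_rw [fourier_eq_integral_wave_mul, wave_comm y, fourierExt, wave, mul_comm]

/-- Trigonometric sums with frequencies in `S`. -/
noncomputable def trigSpan (S : Set ℝ) : Submodule ℂ (ℝ → ℂ) := Submodule.span ℂ (wave '' S)

section TrigSpan

variable {S S' S'' : Set ℝ} {u v : ℝ → ℂ}

lemma wave_mem_trigSpan {s : ℝ} (hs : s ∈ S) : wave s ∈ trigSpan S :=
  Submodule.subset_span ⟨s, hs, rfl⟩

lemma trigSpan_mono (h : S ⊆ S') : trigSpan S ≤ trigSpan S' :=
  Submodule.span_mono (Set.image_mono h)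

lemma trigSpan_union : trigSpan (S ∪ S') = trigSpan S ⊔ trigSpan S' := by
  rw [trigSpan, Set.image_union, Submodule.span_union, trigSpan, trigSpan]

lemma one_mem_trigSpan (hS : (0 : ℝ) ∈ S) : (1 : ℝ → ℂ) ∈ trigSpan S :=
  wave_zero ▸ wave_mem_trigSpan hS

lemma mul_mem_trigSpan (h : ∀ s ∈ S, ∀ s' ∈ S', s + s' ∈ S'')
    (hu : u ∈ trigSpan S) (hv : v ∈ trigSpan S') : u * v ∈ trigSpan S'' := by
  have huv := Submodule.mul_mem_mul hu hv
  rw [trigSpan, trigSpan, Submodule.span_mul_span] at huv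
  refine Submodule.span_mono ?_ huv
  rintro _ ⟨_, ⟨s, hs, rfl⟩, _, ⟨s', hs', rfl⟩, rfl⟩
  exact ⟨s + s', h s hs s' hs', wave_add s s'⟩

lemma eval_wave_mem_trigSpan (P : ℂ[X]) {s : ℝ} (hS : ∀ n ≤ P.natDegree, (n : ℝ) * s ∈ S) :
    (fun y => P.eval (wave s y)) ∈ trigSpan S := by
  have h : (fun y => P.eval (wave s y)) =
      ∑ n ∈ Finset.range (P.natDegree + 1), P.coeff n • wave (n * s) := by
    funext y
    simp [eval_eq_sum_range, wave_natCast_mul]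
  rw [h]
  exact sum_mem fun n hn => Submodule.smul_mem _ _ <|
    wave_mem_trigSpan (hS n (Finset.mem_range_succ_iff.1 hn))

lemma continuous_of_mem_trigSpan (hu : u ∈ trigSpan S) : Continuous u := by
  induction hu using Submodule.span_induction with
  | mem x h => obtain ⟨s, -, rfl⟩ := h; exact continuous_wave s
  | zero => exact continuous_const
  | add x y _ _ hx hy => exact hx.add hy
  | smul a x _ hx => exact hx.const_smul a

lemma exists_norm_le_of_mem_trigSpan (hu : u ∈ trigSpan S) :
    ∃ B, ∀ y, ‖u y‖ ≤ B := by
  induction hu using Submodule.span_induction with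
  | mem x h => obtain ⟨s, -, rfl⟩ := h; exact ⟨1, fun y => (norm_wave s y).le⟩
  | zero => exact ⟨0, fun y => by simp⟩
  | add x y _ _ hx hy =>
    obtain ⟨B, hB⟩ := hx
    obtain ⟨B', hB'⟩ := hy
    exact ⟨B + B', fun y => norm_add_le_of_le (hB y) (hB' y)⟩
  | smul a x _ hx =>
    obtain ⟨B, hB⟩ := hx
    exact ⟨‖a‖ * B, fun y => by rw [Pi.smul_apply, norm_smul]; gcongr; exact hB y⟩

lemma integral_mul_eq_zero_of_mem_trigSpan (hu : u ∈ trigSpan S) {w : ℝ → ℂ}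
    (hw : Integrable w) (hwS : ∀ s ∈ S, 𝓕 w s = 0) :
    Integrable (fun y => u y * w y) ∧ ∫ y, u y * w y = 0 := by
  induction hu using Submodule.span_induction with
  | mem x h =>
    obtain ⟨s, hs, rfl⟩ := h
    refine ⟨hw.bdd_mul (c := 1) (continuous_wave s).aestronglyMeasurable
      (.of_forall fun y => (norm_wave s y).le), ?_⟩
    rw [← fourier_eq_integral_wave_mul, hwS s hs]
  | zero => simp
  | add x y _ _ hx hy =>
    simp only [Pi.add_apply, add_mul]
    exact ⟨hx.1.add hy.1, by rw [integral_add hx.1 hy.1, hx.2, hy.2, add_zero]⟩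
  | smul a x _ hx =>
    simp only [Pi.smul_apply, smul_mul_assoc]
    exact ⟨hx.1.smul a, by rw [integral_smul, hx.2, smul_zero]⟩

instance finite_trigSpan_coe (F : Finset ℝ) : Module.Finite ℂ (trigSpan (F : Set ℝ)) := by
  classical
  rw [trigSpan, ← Finset.coe_image]
  infer_instance

lemma finrank_trigSpan_le (F : Finset ℝ) : Module.finrank ℂ (trigSpan (F : Set ℝ)) ≤ F.card := by
  classical
  rw [trigSpan, ← Finset.coe_image]
  exact (finrank_span_finset_le_card _).trans Finset.card_image_le

end TrigSpan

/-! ### A Paley–Wiener type support principle -/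

lemma integrable_one_add_norm_pow_mul_schwartz (w : SchwartzMap ℝ ℂ) (p : ℕ) :
    Integrable fun y => (1 + ‖y‖) ^ p * ‖w y‖ := by
  have hdom : Integrable fun y => 2 ^ (p - 1) * (‖w y‖ + ‖y‖ ^ p * ‖w y‖) :=
    (w.integrable.norm.add (w.integrable_pow_mul volume p)).const_mul _
  refine hdom.mono' (by have := w.continuous; fun_prop) (.of_forall fun y => ?_)
  rw [Real.norm_of_nonneg (by positivity)]
  calc (1 + ‖y‖) ^ p * ‖w y‖ ≤ 2 ^ (p - 1) * (1 ^ p + ‖y‖ ^ p) * ‖w y‖ := by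
        gcongr
        exact add_pow_le zero_le_one (norm_nonneg y) p
    _ = 2 ^ (p - 1) * (‖w y‖ + ‖y‖ ^ p * ‖w y‖) := by ring

lemma integral_fourier_mul_schwartz {h : ℝ → ℂ} (hi : Integrable h) (w : SchwartzMap ℝ ℂ) :
    ∫ y, 𝓕 h y * w y = ∫ x, h x * 𝓕 w x := by
  rw [SchwartzMap.fourier_coe]
  simpa using! VectorFourier.integral_bilin_fourierIntegral_eq_flip
    (ContinuousLinearMap.mul ℂ ℂ) (L := innerₗ ℝ)
    Real.continuous_fourierChar continuous_inner hi w.integrable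

section Support

variable {h : ℝ → ℂ} {S : Set ℝ} {τ : ℕ → ℝ → ℂ} {K : ℝ} {p : ℕ}

lemma integral_fourier_mul_eq_zero_of_tendsto (hτ : ∀ᶠ J in atTop, τ J ∈ trigSpan S)
    (hlim : ∀ y, Tendsto (fun J => τ J y) atTop (𝓝 (𝓕 h y)))
    (hbd : ∀ J y, ‖τ J y‖ ≤ K * (1 + ‖y‖) ^ p) (w : SchwartzMap ℝ ℂ)
    (hw : ∀ s ∈ S, 𝓕 (w : ℝ → ℂ) s = 0) : ∫ y, 𝓕 h y * w y = 0 := by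
  have hzero : ∀ᶠ J in atTop, ∫ y, τ J y * w y = 0 :=
    hτ.mono fun J hJ => (integral_mul_eq_zero_of_mem_trigSpan hJ w.integrable hw).2
  have htends : Tendsto (fun J => ∫ y, τ J y * w y) atTop (𝓝 (∫ y, 𝓕 h y * w y)) := by
    refine tendsto_integral_filter_of_dominated_convergence
      (fun y => K * ((1 + ‖y‖) ^ p * ‖w y‖)) ?_ ?_ ?_ ?_
    · exact hτ.mono fun J hJ =>
        ((continuous_of_mem_trigSpan hJ).mul w.continuous).aestronglyMeasurable
    · refine .of_forall fun J => .of_forall fun y => ?_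
      rw [norm_mul, ← mul_assoc]
      gcongr
      exact hbd J y
    · exact (integrable_one_add_norm_pow_mul_schwartz w p).const_mul K
    · exact .of_forall fun y => (hlim y).mul_const _
  exact tendsto_nhds_unique htends (tendsto_const_nhds.congr' (hzero.mono fun J hJ => hJ.symm))

theorem eqOn_zero_of_tendsto_fourier {U : Set ℝ} (hc : Continuous h) (hi : Integrable h)
    (hU : IsOpen U) (hSU : Disjoint S U) (hτ : ∀ᶠ J in atTop, τ J ∈ trigSpan S)
    (hlim : ∀ y, Tendsto (fun J => τ J y) atTop (𝓝 (𝓕 h y)))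
    (hbd : ∀ J y, ‖τ J y‖ ≤ K * (1 + ‖y‖) ^ p) : Set.EqOn h 0 U := by
  have hae : ∀ᵐ x, x ∈ U → h x = 0 := by
    refine hU.ae_eq_zero_of_integral_contDiff_smul_eq_zero
      (hi.locallyIntegrable.locallyIntegrableOn U) fun g hg hgs hgU => ?_
    let G : SchwartzMap ℝ ℂ := (hgs.comp_left Complex.ofReal_zero).toSchwartzMap
      (Complex.ofRealCLM.contDiff.comp hg)
    have hG : 𝓕 (𝓕⁻ G) = G := FourierTransform.fourier_fourierInv_eq G
    have hGS : ∀ s ∈ S, 𝓕 ((𝓕⁻ G : SchwartzMap ℝ ℂ) : ℝ → ℂ) s = 0 := fun s hs => by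
      have hgs : g s = 0 := image_eq_zero_of_notMem_tsupport fun hmem =>
        Set.disjoint_left.1 hSU hs (hgU hmem)
      rw [← SchwartzMap.fourier_coe, hG]
      exact Complex.ofReal_eq_zero.2 hgs
    have hflip := integral_fourier_mul_schwartz hi (𝓕⁻ G)
    rw [integral_fourier_mul_eq_zero_of_tendsto hτ hlim hbd _ hGS, hG] at hflip
    rw [hflip]
    exact integral_congr_ae (.of_forall fun x => (Complex.real_smul).trans (mul_comm _ _))
  exact Measure.eqOn_open_of_ae_eq ((ae_restrict_iff' hU.measurableSet).2 hae) hU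
    hc.continuousOn continuousOn_const

end Support

/-! ### Combinations of translates -/

/-- The finite combination `∑ i ∈ I, c i • f (· - s i)` of translates of `f`. -/
noncomputable def translateComb {ι : Type*} (I : Finset ι) (c : ι → ℂ) (s : ι → ℝ) (f : ℝ → ℂ) :
    ℝ → ℂ := fun t => ∑ i ∈ I, c i * f (t - s i)

/-- The element `∑_{ℓ ∈ ℤ} b_ℓ f(· - ℓ)` of the shift-invariant space `V_f`. -/
noncomputable def shiftSeries (b : ℤ → ℂ) (f : ℝ → ℂ) : ℝ → ℂ := fun t => ∑' l : ℤ, b l * f (t - l)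

section Translates

variable {ι : Type*} {I : Finset ι} {c : ι → ℂ} {s : ι → ℝ} {f : ℝ → ℂ}

lemma continuous_translateComb (hf : Continuous f) : Continuous (translateComb I c s f) := by
  unfold translateComb
  fun_prop

lemma integrable_translateComb (hf : Integrable f) : Integrable (translateComb I c s f) :=
  integrable_finsetSum _ fun i _ => (hf.comp_sub_right (s i)).const_mul (c i)

lemma hasCompactSupport_translateComb (hf : HasCompactSupport f) :
    HasCompactSupport (translateComb I c s f) := by
  classical
  have hsum : HasCompactSupport (∑ i ∈ I, fun t => c i * f (t - s i)) := by
    refine Finset.sum_induction _ HasCompactSupport (fun _ _ h h' => h.add h') .zero fun i _ => ?_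
    exact (hf.comp_homeomorph (Homeomorph.subRight (s i))).mul_left
  convert hsum using 1
  funext t
  simp [translateComb]

lemma analyticOnNhd_translateComb (hf : AnalyticOnNhd ℝ f Set.univ) :
    AnalyticOnNhd ℝ (translateComb I c s f) Set.univ := fun t _ =>
  Finset.analyticAt_fun_sum _ fun i _ => analyticAt_const.mul <|
    AnalyticAt.fun_comp (f := fun x => x - s i) (hf (t - s i) trivial)
      (analyticAt_id.fun_sub analyticAt_const)

lemma fourier_comp_sub_right (f : ℝ → ℂ) (s y : ℝ) :
    𝓕 (fun x => f (x - s)) y = wave s y * 𝓕 f y := by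
  have hshift := integral_sub_right_eq_self (μ := volume) (fun x => wave y (x + s) * f x) s
  simp only [sub_add_cancel] at hshift
  rw [fourier_eq_integral_wave_mul, hshift, fourier_eq_integral_wave_mul, ← integral_const_mul]
  refine integral_congr_ae (.of_forall fun x => ?_)
  simp only
  rw [wave_comm y, wave_add, Pi.mul_apply, wave_comm x, mul_left_comm, mul_assoc]

lemma fourier_sum_comp_sub_right {f : ι → ℝ → ℂ} (hf : ∀ i, Integrable (f i)) (y : ℝ) :
    𝓕 (fun x => ∑ i ∈ I, f i (x - s i)) y = ∑ i ∈ I, wave (s i) y * 𝓕 (f i) y := by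
  simp_rw [← fourier_comp_sub_right (f _), fourier_eq_integral_wave_mul, Finset.mul_sum]
  refine integral_finsetSum I fun i _ => ?_
  exact ((hf i).comp_sub_right (s i)).bdd_mul (c := 1) (continuous_wave y).aestronglyMeasurable
    (.of_forall fun x => (norm_wave y x).le)

lemma fourier_const_mul (a : ℂ) (f : ℝ → ℂ) (y : ℝ) : 𝓕 (fun x => a * f x) y = a * 𝓕 f y := by
  simp only [fourier_eq_integral_wave_mul, ← integral_const_mul, mul_left_comm]

lemma fourier_translateComb (hf : Integrable f) :
    𝓕 (translateComb I c s f) = (∑ i ∈ I, c i • wave (s i)) * 𝓕 f := by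
  funext y
  refine (fourier_sum_comp_sub_right (fun i => hf.const_mul (c i)) y).trans ?_
  simp only [fourier_const_mul, Pi.mul_apply, Finset.sum_apply, Pi.smul_apply, smul_eq_mul,
    Finset.sum_mul, mul_assoc, mul_left_comm]

lemma exists_finset_intCast_sub_eq_zero (hf : HasCompactSupport f) {K : Set ℝ}
    (hK : IsCompact K) : ∃ L : Finset ℤ, ∀ t ∈ K, ∀ l ∉ L, f (t - (l : ℝ)) = 0 := by
  have hcpt : IsCompact ((↑) ⁻¹' (K - tsupport f) : Set ℤ) :=
    Int.isClosedEmbedding_coe_real.isCompact_preimage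
      (sub_eq_add_neg K (tsupport f) ▸ hK.add hf.isCompact.neg)
  refine ⟨hcpt.finite_of_discrete.toFinset, fun t ht l hl => ?_⟩
  contrapose! hl
  exact (Set.Finite.mem_toFinset _).2
    ⟨t, ht, t - l, subset_tsupport _ hl, by ring⟩

lemma shiftSeries_eq_translateComb {L : Finset ℤ} {t : ℝ} (b : ℤ → ℂ)
    (hL : ∀ l ∉ L, f (t - (l : ℝ)) = 0) :
    shiftSeries b f t = translateComb L b (fun l => (l : ℝ)) f t :=
  tsum_eq_sum fun l hl => by rw [hL l hl, mul_zero]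

lemma summable_shiftSeries (hf : HasCompactSupport f) (b : ℤ → ℂ) (t : ℝ) :
    Summable fun l : ℤ => b l * f (t - l) := by
  obtain ⟨L, hL⟩ := exists_finset_intCast_sub_eq_zero hf (isCompact_singleton (x := t))
  exact summable_of_ne_finset_zero fun l hl => by rw [hL t rfl l hl, mul_zero]

lemma shiftSeries_translateComb (hf : HasCompactSupport f) (b : ℤ → ℂ) :
    shiftSeries b (translateComb I c s f) = translateComb I c s (shiftSeries b f) := by
  funext t
  have hsummable : ∀ i ∈ I, Summable fun l : ℤ => c i * (b l * f (t - s i - l)) := fun i _ =>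
    (summable_shiftSeries hf b (t - s i)).mul_left (c i)
  simp only [shiftSeries, translateComb, ← tsum_mul_left, ← Summable.tsum_finsetSum hsummable,
    Finset.mul_sum]
  refine tsum_congr fun l => Finset.sum_congr rfl fun i _ => ?_
  rw [sub_right_comm, mul_left_comm]

end Translates

/-! ### Growth of the partial products -/

lemma norm_coeff_le_of_norm_eval_le {P : ℂ[X]} {C : ℝ} (hP : ∀ w : ℂ, ‖w‖ = 1 → ‖P.eval w‖ ≤ C)
    (n : ℕ) : ‖P.coeff n‖ ≤ C := by
  by_cases hn : n ∈ P.support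
  · refine (pow_le_pow_iff_left₀ (norm_nonneg _)
      ((norm_nonneg _).trans (hP 1 norm_one)) two_ne_zero).1 ?_
    calc ‖P.coeff n‖ ^ 2 ≤ ∑ i ∈ P.support, ‖P.coeff i‖ ^ 2 :=
          Finset.single_le_sum (f := fun i => ‖P.coeff i‖ ^ 2) (fun _ _ => by positivity) hn
      _ = Real.circleAverage (fun w => ‖P.eval w‖ ^ 2) 0 1 :=
          P.sum_sq_norm_coeff_eq_circleAverage
      _ ≤ C ^ 2 := Real.circleAverage_mono_on_of_le_circle
          (ContinuousOn.circleIntegrable' (by fun_prop)) fun w hw => by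
            gcongr
            exact hP w (by simpa using hw)
  · rw [notMem_support_iff.1 hn, norm_zero]
    exact (norm_nonneg _).trans (hP 1 norm_one)

lemma norm_pow_sub_one_le {w : ℂ} (hw : ‖w‖ = 1) (n : ℕ) : ‖w ^ n - 1‖ ≤ n * ‖w - 1‖ := by
  rw [← mul_geom_sum, norm_mul, mul_comm]
  gcongr
  exact (norm_sum_le _ _).trans_eq (by simp [hw])

lemma norm_eval_sub_eval_one_le {P : ℂ[X]} {N : ℕ} {C : ℝ} (hN : P.natDegree ≤ N)
    (hP : ∀ w : ℂ, ‖w‖ = 1 → ‖P.eval w‖ ≤ C) {w : ℂ} (hw : ‖w‖ = 1) :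
    ‖P.eval w - P.eval 1‖ ≤ (N + 1) * (C * N) * ‖w - 1‖ := by
  have hC : 0 ≤ C := (norm_nonneg _).trans (hP 1 norm_one)
  rw [eval_eq_sum_range' (Nat.lt_succ_of_le hN), eval_eq_sum_range' (Nat.lt_succ_of_le hN),
    ← Finset.sum_sub_distrib]
  calc ‖∑ n ∈ Finset.range (N + 1), (P.coeff n * w ^ n - P.coeff n * 1 ^ n)‖
      ≤ ∑ _n ∈ Finset.range (N + 1), C * (N * ‖w - 1‖) := by
        refine norm_sum_le_of_le _ fun n hn => ?_
        rw [one_pow, ← mul_sub, norm_mul]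
        have hnN : (n : ℝ) ≤ N := by exact_mod_cast Finset.mem_range_succ_iff.1 hn
        gcongr
        · exact norm_coeff_le_of_norm_eval_le hP n
        · exact (norm_pow_sub_one_le hw n).trans (by gcongr)
    _ = (N + 1) * (C * N) * ‖w - 1‖ := by
        rw [Finset.sum_const, Finset.card_range, nsmul_eq_mul]
        push_cast
        ring

lemma sum_two_inv_pow_succ (j J : ℕ) (hJ : j ≤ J) :
    ∑ i ∈ Finset.Ico j J, (2 : ℝ)⁻¹ ^ (i + 1) = 2⁻¹ ^ j - 2⁻¹ ^ J := by
  rw [← neg_inj, neg_sub, ← Finset.sum_Ico_sub _ hJ, ← Finset.sum_neg_distrib]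
  refine Finset.sum_congr rfl fun i _ => ?_
  ring

/- Scales with `2^{-(i+1)} r > 1/2` are estimated by `C` each; there are at most `n` of them. The
remaining factors multiply to at most `e^L`. -/
lemma prod_le_pow_mul_exp {C L : ℝ} (hC : 1 ≤ C) (hL : 0 ≤ L) (n J : ℕ) {x : ℕ → ℝ} {r : ℝ}
    (hx0 : ∀ i, 0 ≤ x i) (hxC : ∀ i, x i ≤ C) (hxL : ∀ i, x i ≤ 1 + L * (2⁻¹ ^ (i + 1) * r))
    (hr : r ≤ 2 ^ n) : ∏ i ∈ Finset.range J, x i ≤ C ^ n * Real.exp L := by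
  induction n generalizing J x r with
  | zero =>
    calc ∏ i ∈ Finset.range J, x i
        ≤ ∏ i ∈ Finset.range J, Real.exp (L * 2⁻¹ ^ (i + 1)) := by
          refine Finset.prod_le_prod (fun i _ => hx0 i) fun i _ => (hxL i).trans ?_
          rw [add_comm]
          refine le_trans ?_ (Real.add_one_le_exp _)
          rw [pow_zero] at hr
          gcongr
          exact mul_le_of_le_one_right (by positivity) hr
      _ = Real.exp (L * (1 - 2⁻¹ ^ J)) := by
          rw [← Real.exp_sum, ← Finset.mul_sum, Finset.range_eq_Ico,
            sum_two_inv_pow_succ 0 J J.zero_le, pow_zero]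
      _ ≤ C ^ 0 * Real.exp L := by
          rw [pow_zero, one_mul]
          gcongr
          exact mul_le_of_le_one_right hL (sub_le_self _ (by positivity))
  | succ n ih =>
    cases J with
    | zero => exact one_le_mul_of_one_le_of_one_le (one_le_pow₀ hC) (Real.one_le_exp hL)
    | succ J =>
      rw [Finset.prod_range_succ', pow_succ, mul_right_comm]
      refine mul_le_mul (ih J (r := r / 2) (fun i => hx0 _) (fun i => hxC _) (fun i => ?_) ?_)
        (hxC 0) (hx0 0) (by positivity)
      · exact (hxL (i + 1)).trans_eq (by ring)
      · rw [pow_succ] at hr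
        linarith

/-- The product over `i ∈ I` of the trigonometric polynomials `y ↦ P_i(e^{-2πi 2^{-(i+1)} y})`.
Indices start at `0`, so `P i` is the symbol of the mask `a_{i+1}`. -/
noncomputable def maskProd (P : ℕ → ℂ[X]) (I : Finset ℕ) : ℝ → ℂ :=
  ∏ i ∈ I, fun y => (P i).eval (wave (2⁻¹ ^ (i + 1)) y)

section MaskProd

variable {P : ℕ → ℂ[X]} {N : ℕ}

lemma exists_norm_maskProd_le {C : ℝ} (hN : ∀ i, (P i).natDegree ≤ N)
    (hone : ∀ i, (P i).eval 1 = 1) (hC : ∀ i, ∀ w : ℂ, ‖w‖ = 1 → ‖(P i).eval w‖ ≤ C) :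
    ∃ (K : ℝ) (p : ℕ), ∀ J y, ‖maskProd P (Finset.range J) y‖ ≤ K * (1 + ‖y‖) ^ p := by
  have hC1 : 1 ≤ C := by simpa [hone] using hC 0 1 norm_one
  obtain ⟨p, hp⟩ := pow_unbounded_of_one_lt C (one_lt_two (α := ℝ))
  set L : ℝ := (N + 1) * (C * N) * (2 * Real.pi)
  have hfactor (i : ℕ) (y : ℝ) :
      ‖(P i).eval (wave (2⁻¹ ^ (i + 1)) y)‖ ≤ 1 + L * (2⁻¹ ^ (i + 1) * (1 + ‖y‖)) := by
    have hlip := norm_eval_sub_eval_one_le (hN i) (hC i) (norm_wave (2⁻¹ ^ (i + 1)) y)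
    rw [hone] at hlip
    calc ‖(P i).eval (wave (2⁻¹ ^ (i + 1)) y)‖
        ≤ 1 + (N + 1) * (C * N) * ‖wave (2⁻¹ ^ (i + 1)) y - 1‖ :=
          (norm_le_norm_add_norm_sub' _ 1).trans (by rw [norm_one]; gcongr)
      _ ≤ 1 + (N + 1) * (C * N) * (2 * Real.pi * |2⁻¹ ^ (i + 1) * y|) := by
          gcongr
          exact norm_wave_sub_one_le _ y
      _ = 1 + L * (2⁻¹ ^ (i + 1) * ‖y‖) := by
          rw [abs_mul, abs_of_pos (by positivity), ← Real.norm_eq_abs, ← mul_assoc]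
      _ ≤ 1 + L * (2⁻¹ ^ (i + 1) * (1 + ‖y‖)) := by
          gcongr
          exact le_add_of_nonneg_left zero_le_one
  refine ⟨C * Real.exp L, p, fun J y => ?_⟩
  obtain ⟨n, hn, hn'⟩ := exists_nat_pow_near (le_add_of_nonneg_right (norm_nonneg y))
    (one_lt_two (α := ℝ))
  rw [maskProd, Finset.prod_apply, norm_prod]
  calc ∏ i ∈ Finset.range J, ‖(P i).eval (wave (2⁻¹ ^ (i + 1)) y)‖
      ≤ C ^ (n + 1) * Real.exp L :=
        prod_le_pow_mul_exp hC1 (by positivity) (n + 1) J (fun _ => norm_nonneg _)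
          (fun i => hC i _ (norm_wave _ y)) (fun i => hfactor i y) hn'.le
    _ ≤ C * (2 ^ p) ^ n * Real.exp L := by
        rw [pow_succ']
        gcongr
    _ = C * Real.exp L * (2 ^ n) ^ p := by
        rw [pow_right_comm]
        ring
    _ ≤ C * Real.exp L * (1 + ‖y‖) ^ p := by gcongr

/-! ### Frequencies of the partial products -/

lemma zmultiples_two_inv_pow_anti {i j : ℕ} (hij : i ≤ j) :
    AddSubgroup.zmultiples ((2 : ℝ)⁻¹ ^ i) ≤ AddSubgroup.zmultiples ((2 : ℝ)⁻¹ ^ j) := by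
  rw [AddSubgroup.zmultiples_le, AddSubgroup.mem_zmultiples_iff]
  refine ⟨2 ^ (j - i), ?_⟩
  obtain ⟨k, rfl⟩ := Nat.exists_eq_add_of_le hij
  rw [Nat.add_sub_cancel_left, pow_add, zsmul_eq_mul, mul_comm, mul_assoc]
  push_cast
  rw [← mul_pow, inv_mul_cancel₀ two_ne_zero, one_pow, mul_one]

lemma intCast_mem_zmultiples_two_inv_pow (l : ℤ) (j : ℕ) :
    (l : ℝ) ∈ AddSubgroup.zmultiples ((2 : ℝ)⁻¹ ^ j) :=
  zmultiples_two_inv_pow_anti j.zero_le ⟨l, by simp⟩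

lemma mul_mem_trigSpan_addSubgroup {H : AddSubgroup ℝ} {u v : ℝ → ℂ} (hu : u ∈ trigSpan H)
    (hv : v ∈ trigSpan H) : u * v ∈ trigSpan H :=
  mul_mem_trigSpan (fun _ hs _ hs' => H.add_mem hs hs') hu hv

lemma maskProd_range_mem_trigSpan (P : ℕ → ℂ[X]) (j : ℕ) :
    maskProd P (Finset.range j) ∈ trigSpan (AddSubgroup.zmultiples ((2 : ℝ)⁻¹ ^ j)) := by
  refine Finset.prod_induction _ (· ∈ trigSpan _) (fun _ _ => mul_mem_trigSpan_addSubgroup)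
    (one_mem_trigSpan (zero_mem _)) fun i hi => eval_wave_mem_trigSpan _ fun n _ => ?_
  rw [← nsmul_eq_mul]
  exact nsmul_mem (zmultiples_two_inv_pow_anti (Finset.mem_range.1 hi)
    (AddSubgroup.mem_zmultiples _)) n

lemma maskProd_mem_trigSpan_Icc (hN : ∀ i, (P i).natDegree ≤ N) (I : Finset ℕ) :
    maskProd P I ∈ trigSpan (Set.Icc 0 (∑ i ∈ I, N * 2⁻¹ ^ (i + 1))) := by
  induction I using Finset.cons_induction with
  | empty => exact one_mem_trigSpan (by simp)
  | cons i I hi ih =>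
    rw [maskProd, Finset.prod_cons, Finset.sum_cons]
    refine mul_mem_trigSpan (S := Set.Icc 0 (N * 2⁻¹ ^ (i + 1))) ?_
      (eval_wave_mem_trigSpan _ fun n hn => ?_) ih
    · exact fun s hs s' hs' => ⟨add_nonneg hs.1 hs'.1, add_le_add hs.2 hs'.2⟩
    · have hnN : (n : ℝ) ≤ N := by exact_mod_cast hn.trans (hN i)
      exact ⟨by positivity, by gcongr⟩

lemma maskProd_Ico_mem_trigSpan (hN : ∀ i, (P i).natDegree ≤ N) {j J : ℕ} (hJ : j ≤ J) :
    maskProd P (Finset.Ico j J) ∈ trigSpan (Set.Icc 0 (N * 2⁻¹ ^ j)) := by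
  refine trigSpan_mono (Set.Icc_subset_Icc_right ?_) (maskProd_mem_trigSpan_Icc hN _)
  rw [← Finset.mul_sum, sum_two_inv_pow_succ j J hJ]
  gcongr
  exact sub_le_self _ (by positivity)

end MaskProd

/-! ### Dependence of translates at dyadic points -/

lemma exists_sum_smul_mem_of_finrank_lt {𝕜 V ι : Type*} [DivisionRing 𝕜] [AddCommGroup V]
    [Module 𝕜 V] [Fintype ι] {A B : Submodule 𝕜 V} [Module.Finite 𝕜 A]
    (hA : Module.finrank 𝕜 A < Fintype.card ι) {u : ι → V} (hu : ∀ i, u i ∈ A ⊔ B) :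
    ∃ c : ι → 𝕜, c ≠ 0 ∧ ∑ i, c i • u i ∈ B := by
  choose v hv w hw hvw using fun i => Submodule.mem_sup.1 (hu i)
  have hdep : ¬LinearIndependent 𝕜 fun i => (⟨v i, hv i⟩ : A) := fun hli =>
    hA.not_ge hli.fintype_card_le_finrank
  obtain ⟨c, hc, i, hi⟩ := Fintype.not_linearIndependent_iff.1 hdep
  refine ⟨c, fun h0 => hi (congrFun h0 i), ?_⟩
  have hcv : ∑ i, c i • v i = 0 := by simpa using congrArg Subtype.val hc
  simp_rw [← hvw, smul_add, Finset.sum_add_distrib, hcv, zero_add]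
  exact Submodule.sum_mem _ fun i _ => B.smul_mem _ (hw i)

/- Multiplying by frequencies in `[0, Nδ]` moves a multiple `nδ` into the gap `(0, δ)` only if
`-N < n ≤ 0`, so it suffices to annihilate these `N` frequencies. -/
lemma exists_sum_smul_mul_mem_trigSpan_compl_Ioo {N : ℕ} {δ : ℝ} (hδ : 0 < δ)
    {u : Fin (N + 1) → ℝ → ℂ} (hu : ∀ i, u i ∈ trigSpan (AddSubgroup.zmultiples δ)) :
    ∃ c : Fin (N + 1) → ℂ, c ≠ 0 ∧ ∀ v ∈ trigSpan (Set.Icc 0 (N * δ)),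
      (∑ i, c i • u i) * v ∈ trigSpan (Set.Ioo 0 δ)ᶜ := by
  classical
  let window : Finset ℝ := (Finset.Ioc (-(N : ℤ)) 0).image (· • δ)
  let rest : Set ℝ := {s | ∃ n : ℤ, (n ≤ -N ∨ 1 ≤ n) ∧ n • δ = s}
  have hcover : (AddSubgroup.zmultiples δ : Set ℝ) ⊆ ↑window ∪ rest := by
    rintro _ ⟨n, rfl⟩
    by_cases hn : n ∈ Finset.Ioc (-(N : ℤ)) 0
    · exact .inl (Finset.mem_image_of_mem _ hn)
    · exact .inr ⟨n, by rw [Finset.mem_Ioc] at hn; omega, rfl⟩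
  have hcard : Module.finrank ℂ (trigSpan (window : Set ℝ)) < Fintype.card (Fin (N + 1)) := by
    rw [Fintype.card_fin, Nat.lt_succ_iff]
    exact (finrank_trigSpan_le window).trans (Finset.card_image_le.trans (by simp))
  obtain ⟨c, hc, hmem⟩ := exists_sum_smul_mem_of_finrank_lt hcard fun i =>
    trigSpan_union (S := window) (S' := rest) ▸ trigSpan_mono hcover (hu i)
  refine ⟨c, hc, fun v hv => mul_mem_trigSpan ?_ hmem hv⟩
  rintro _ ⟨n, hn, rfl⟩ s ⟨hs0, hsN⟩ ⟨hpos, hlt⟩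
  rw [zsmul_eq_mul] at hpos hlt
  rcases hn with hn | hn
  · have hn' : (n : ℝ) ≤ -N := by exact_mod_cast hn
    nlinarith
  · have hn' : (1 : ℝ) ≤ n := by exact_mod_cast hn
    nlinarith

/-- The subgroup of `ℝ` of dyadic rationals. -/
noncomputable def dyadics : AddSubgroup ℝ := ⨆ j : ℕ, AddSubgroup.zmultiples ((2 : ℝ)⁻¹ ^ j)

lemma exists_forall_mem_zmultiples_two_inv_pow {ι : Type*} [Finite ι] {s : ι → ℝ}
    (hs : ∀ i, s i ∈ dyadics) : ∃ j : ℕ, ∀ i, s i ∈ AddSubgroup.zmultiples ((2 : ℝ)⁻¹ ^ j) := by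
  have hmono : Monotone fun j : ℕ => AddSubgroup.zmultiples ((2 : ℝ)⁻¹ ^ j) := fun _ _ =>
    zmultiples_two_inv_pow_anti
  choose k hk using fun i => (AddSubgroup.mem_iSup_of_directed hmono.directed_le).1 (hs i)
  obtain ⟨j, hj⟩ := Finite.exists_le k
  exact ⟨j, fun i => hmono (hj i) (hk i)⟩

lemma dense_dyadics : Dense (dyadics : Set ℝ) := by
  refine AddSubgroup.dense_of_not_isolated_zero _ fun ε hε => ?_
  obtain ⟨j, hj⟩ := exists_pow_lt_of_lt_one hε (by norm_num : (2 : ℝ)⁻¹ < 1)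
  exact ⟨2⁻¹ ^ j, AddSubgroup.mem_iSup_of_mem j (AddSubgroup.mem_zmultiples _), by positivity, hj⟩

section Dependence

variable {P : ℕ → ℂ[X]} {N : ℕ} {φ : ℝ → ℂ} {s : Fin (N + 1) → ℝ}

lemma exists_translateComb_eqOn_zero {p j : ℕ} {K : ℝ} (hN : ∀ i, (P i).natDegree ≤ N)
    (hbd : ∀ J y, ‖maskProd P (Finset.range J) y‖ ≤ K * (1 + ‖y‖) ^ p)
    (hlim : ∀ y, Tendsto (fun J => maskProd P (Finset.range J) y) atTop (𝓝 (𝓕 φ y)))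
    {ψ Q : ℝ → ℂ} (hψ : Continuous ψ) (hψi : Integrable ψ) (hψφ : 𝓕 ψ = Q * 𝓕 φ)
    (hQ : Q ∈ trigSpan (AddSubgroup.zmultiples ((2 : ℝ)⁻¹ ^ j)))
    (hs : ∀ i, s i ∈ AddSubgroup.zmultiples ((2 : ℝ)⁻¹ ^ j)) :
    ∃ c : Fin (N + 1) → ℂ, c ≠ 0 ∧
      Set.EqOn (translateComb Finset.univ c s ψ) 0 (Set.Ioo 0 (2⁻¹ ^ j)) := by
  obtain ⟨c, hc, hgap⟩ := exists_sum_smul_mul_mem_trigSpan_compl_Ioo (δ := 2⁻¹ ^ j) (by positivity)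
    fun i => mul_mem_trigSpan_addSubgroup (wave_mem_trigSpan (hs i))
      (mul_mem_trigSpan_addSubgroup hQ (maskProd_range_mem_trigSpan P j))
  set T : ℝ → ℂ := (∑ i, c i • wave (s i)) * Q with hT
  have hTmem : T ∈ trigSpan (AddSubgroup.zmultiples ((2 : ℝ)⁻¹ ^ j)) :=
    mul_mem_trigSpan_addSubgroup
      (Submodule.sum_mem _ fun i _ => Submodule.smul_mem _ _ (wave_mem_trigSpan (hs i))) hQ
  obtain ⟨B, hB⟩ := exists_norm_le_of_mem_trigSpan hTmem
  have hfourier : 𝓕 (translateComb Finset.univ c s ψ) = T * 𝓕 φ := by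
    rw [fourier_translateComb hψi, hψφ, ← mul_assoc]
  refine ⟨c, hc, eqOn_zero_of_tendsto_fourier (S := (Set.Ioo 0 (2⁻¹ ^ j))ᶜ)
    (τ := fun J => T * maskProd P (Finset.range J)) (K := B * K) (p := p)
    (continuous_translateComb hψ) (integrable_translateComb hψi) isOpen_Ioo disjoint_compl_left
    ?_ (fun y => ?_) fun J y => ?_⟩
  · filter_upwards [eventually_ge_atTop j] with J hJ
    convert hgap _ (maskProd_Ico_mem_trigSpan hN hJ) using 1
    rw [maskProd, ← Finset.prod_range_mul_prod_Ico _ hJ, ← mul_assoc, hT, maskProd, maskProd]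
    simp_rw [Finset.sum_mul, smul_mul_assoc, mul_assoc]
  · rw [hfourier]
    exact (hlim y).const_mul _
  · rw [Pi.mul_apply, norm_mul, mul_assoc]
    exact mul_le_mul (hB y) (hbd J y) (norm_nonneg _) ((norm_nonneg _).trans (hB y))

lemma exists_translateComb_shiftSeries_eq_zero {C : ℝ} (hN : ∀ i, (P i).natDegree ≤ N)
    (hone : ∀ i, (P i).eval 1 = 1) (hC : ∀ i, ∀ w : ℂ, ‖w‖ = 1 → ‖(P i).eval w‖ ≤ C)
    (hlim : ∀ y, Tendsto (fun J => maskProd P (Finset.range J) y) atTop (𝓝 (𝓕 φ y)))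
    (hφ : Continuous φ) (hsupp : HasCompactSupport φ) {a : ℤ → ℂ}
    (hana : AnalyticOnNhd ℝ (shiftSeries a φ) Set.univ)
    (hs : ∀ i, s i ∈ dyadics) :
    ∃ c : Fin (N + 1) → ℂ, c ≠ 0 ∧ translateComb Finset.univ c s (shiftSeries a φ) = 0 := by
  obtain ⟨K, p, hbd⟩ := exists_norm_maskProd_le hN hone hC
  obtain ⟨j, hj⟩ := exists_forall_mem_zmultiples_two_inv_pow hs
  obtain ⟨L, hL⟩ := exists_finset_intCast_sub_eq_zero hsupp
    (isCompact_iUnion fun i => isCompact_Icc.image (continuous_sub_right (s i)) :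
      IsCompact (⋃ i, (· - s i) '' Set.Icc 0 ((2 : ℝ)⁻¹ ^ j)))
  have hφi := hφ.integrable_of_hasCompactSupport (μ := volume) hsupp
  obtain ⟨c, hc, hzero⟩ := exists_translateComb_eqOn_zero (s := s) hN hbd hlim
    (continuous_translateComb hφ) (integrable_translateComb hφi) (fourier_translateComb hφi)
    (Submodule.sum_mem _ fun l _ => Submodule.smul_mem _ (a l)
      (wave_mem_trigSpan (intCast_mem_zmultiples_two_inv_pow l j)) :
        ∑ l ∈ L, a l • wave l ∈ _) hj
  have hlocal : Set.EqOn (translateComb Finset.univ c s (shiftSeries a φ)) 0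
      (Set.Ioo 0 (2⁻¹ ^ j)) := fun t ht => by
    rw [← hzero ht]
    refine Finset.sum_congr rfl fun i _ => ?_
    rw [shiftSeries_eq_translateComb a (hL (t - s i)
      (Set.mem_iUnion.2 ⟨i, t, Set.Ioo_subset_Icc_self ht, rfl⟩))]
  have hδ : (0 : ℝ) < 2⁻¹ ^ j := by positivity
  refine ⟨c, hc, (analyticOnNhd_translateComb hana).eq_of_eventuallyEq (z₀ := 2⁻¹ ^ j / 2)
    (fun _ _ => analyticAt_const) ?_⟩
  exact hlocal.eventuallyEq_of_mem (Ioo_mem_nhds (half_pos hδ) (half_lt_self hδ))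

end Dependence

/-! ### Derivatives of the Fourier transform and Poisson summation -/

lemma hasDerivAt_integral_mul_cexp {f κ : ℝ → ℂ} (hf : Continuous f) (hs : HasCompactSupport f)
    (hκ : Continuous κ) (z : ℂ) :
    HasDerivAt (fun z => ∫ x, f x * Complex.exp (κ x * z))
      (∫ x, κ x * f x * Complex.exp (κ x * z)) z := by
  refine (hasDerivAt_integral_of_dominated_loc_of_deriv_le (Metric.ball_mem_nhds z one_pos)
    (F' := fun z x => κ x * f x * Complex.exp (κ x * z))
    (bound := fun x => ‖κ x‖ * ‖f x‖ * Real.exp (‖κ x‖ * (‖z‖ + 1)))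
    (.of_forall fun z => ?_) ?_ ?_ ?_ ?_ ?_).2
  · exact Continuous.aestronglyMeasurable (by fun_prop)
  · exact Continuous.integrable_of_hasCompactSupport (by fun_prop) hs.mul_right
  · exact Continuous.aestronglyMeasurable (by fun_prop)
  · refine .of_forall fun x w hw => ?_
    have hwz : ‖w‖ ≤ ‖z‖ + 1 :=
      norm_le_norm_add_const_of_dist_le (Metric.mem_ball.1 hw).le
    rw [norm_mul, norm_mul]
    gcongr
    refine (Complex.norm_exp_le_exp_norm _).trans ?_
    rw [norm_mul]
    gcongr
  · exact Continuous.integrable_of_hasCompactSupport (by fun_prop) hs.norm.mul_left.mul_right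
  · refine .of_forall fun x w _ => ?_
    have hexp := ((hasDerivAt_id' w).const_mul (κ x)).cexp.const_mul (f x)
    rwa [mul_one, mul_rotate', mul_comm (Complex.exp _)] at hexp

lemma deriv_fourierExt {f : ℝ → ℂ} (hf : Continuous f) (hs : HasCompactSupport f) :
    deriv (fourierExt f) = fourierExt fun x => -(2 * Real.pi * Complex.I * x) * f x := by
  funext z
  refine HasDerivAt.deriv ?_
  simpa only [fourierExt, neg_mul] using! hasDerivAt_integral_mul_cexp hf hs
    (κ := fun x => -(2 * Real.pi * Complex.I * x)) (by fun_prop) z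

lemma iteratedDeriv_fourierExt {f : ℝ → ℂ} (hf : Continuous f) (hs : HasCompactSupport f) (k : ℕ) :
    iteratedDeriv k (fourierExt f) =
      fourierExt fun x => (-(2 * Real.pi * Complex.I * x)) ^ k * f x := by
  induction k generalizing f with
  | zero => simp
  | succ k ih =>
    have hs' : HasCompactSupport fun x : ℝ => -(2 * Real.pi * Complex.I * x) * f x := hs.mul_left
    rw [iteratedDeriv_succ', deriv_fourierExt hf hs, ih (by fun_prop) hs']
    simp_rw [pow_succ, mul_assoc]

lemma fourier_intCast_eq_zero_of_tsum_eq_zero {f : ℝ → ℂ} (hf : Continuous f)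
    (hs : HasCompactSupport f) (h : ∀ t : ℝ, ∑' l : ℤ, f (t - l) = 0) (n : ℤ) : 𝓕 f n = 0 := by
  let F : C(ℝ, ℂ) := ⟨f, hf⟩
  have hsum (K : TopologicalSpace.Compacts ℝ) :
      Summable fun n : ℤ => ‖(F.comp (ContinuousMap.addRight (n : ℝ))).restrict K‖ := by
    obtain ⟨L, hL⟩ := exists_finset_intCast_sub_eq_zero hs K.isCompact
    refine summable_of_ne_finset_zero (s := L.map (Equiv.neg ℤ).toEmbedding) fun n hn => ?_
    have hnL : -n ∉ L := by simpa using hn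
    rw [norm_eq_zero]
    ext x
    simpa [F] using! hL x x.2 _ hnL
  have hperiodization (x : ℝ) :
      (∑' n : ℤ, F.comp (ContinuousMap.addRight (n • (1 : ℝ)))) x = 0 := by
    simp only [zsmul_one]
    rw [← ContinuousMap.tsum_apply (ContinuousMap.summable_of_locally_summable_norm hsum) x,
      ← h x, ← (Equiv.neg ℤ).tsum_eq]
    refine tsum_congr fun l => ?_
    simp [F, sub_eq_add_neg]
  refine (Real.fourierCoeff_tsum_comp_add hsum n).symm.trans ?_
  rw [fourierCoeff_eq_intervalIntegral _ n 0]
  simp only [Function.Periodic.lift_coe, hperiodization, smul_zero, intervalIntegral.integral_zero]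

/-! ### The polynomials `𝓕 (x ↦ q(w - x) Φ(x))(n)` -/

/-- The polynomial in `w` with value `𝓕 (x ↦ q(w - x) Φ(x))(n)`, see `eval_fourierPoly`. It is
written through the derivatives of `𝓕 Φ` at `n` by Taylor expansion of `q(w - x)` at `w`. -/
noncomputable def fourierPoly (Φ : ℝ → ℂ) (q : ℂ[X]) (n : ℤ) : ℂ[X] :=
  ∑ k ∈ Finset.range (q.natDegree + 1),
    C (((2 * Real.pi * Complex.I) ^ k)⁻¹ * iteratedDeriv k (fourierExt Φ) n) * hasseDeriv k q

section FourierPoly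

variable {Φ : ℝ → ℂ} {q : ℂ[X]}

lemma eval_sub_eq_sum_hasseDeriv (q : ℂ[X]) (w x : ℂ) :
    q.eval (w - x) =
      ∑ k ∈ Finset.range (q.natDegree + 1), (hasseDeriv k q).eval w * (-x) ^ k := by
  rw [sub_eq_neg_add, ← taylor_eval, eval_eq_sum_range, natDegree_taylor]
  simp only [taylor_coeff]

lemma eval_fourierPoly (hΦ : Continuous Φ) (hs : HasCompactSupport Φ) (q : ℂ[X]) (n : ℤ) (w : ℂ) :
    (fourierPoly Φ q n).eval w = 𝓕 (fun x : ℝ => q.eval (w - x) * Φ x) n := by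
  simp only [fourier_eq_integral_wave_mul, eval_sub_eq_sum_hasseDeriv, Finset.sum_mul,
    Finset.mul_sum, fourierPoly, eval_finsetSum, eval_mul, eval_C]
  rw [integral_finsetSum]
  · refine Finset.sum_congr rfl fun k _ => ?_
    rw [iteratedDeriv_fourierExt hΦ hs, ← Complex.ofReal_intCast, fourierExt_ofReal,
      fourier_eq_integral_wave_mul, ← integral_const_mul, ← integral_mul_const]
    refine integral_congr_ae (.of_forall fun x => ?_)
    simp only [neg_mul_eq_mul_neg _ (x : ℂ), mul_pow (_ * _) (-(x : ℂ))]
    field_simp [Complex.two_pi_I_ne_zero]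
  · exact fun k _ => Continuous.integrable_of_hasCompactSupport
      (by have := continuous_wave n; fun_prop) hs.mul_left.mul_left

lemma fourierPoly_eq_zero_of_shiftSeries_eq_zero (hΦ : Continuous Φ) (hs : HasCompactSupport Φ)
    (h : shiftSeries (fun l => q.eval (l : ℂ)) Φ = 0) (n : ℤ) : fourierPoly Φ q n = 0 := by
  have hperiodization (w : ℂ) (t : ℝ) :
      ∑' l : ℤ, q.eval (w - ((t - l : ℝ) : ℂ)) * Φ (t - l) = 0 := by
    obtain ⟨L, hL⟩ := exists_finset_intCast_sub_eq_zero hs (isCompact_singleton (x := t))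
    rw [tsum_eq_sum (s := L) fun l hl => by rw [hL t rfl l hl, mul_zero]]
    let W : ℂ[X] := ∑ l ∈ L, C (Φ (t - l)) * q.comp (X - C ((t - l : ℝ) : ℂ))
    have hW (w : ℂ) : W.eval w = ∑ l ∈ L, q.eval (w - ((t - l : ℝ) : ℂ)) * Φ (t - l) := by
      simp only [W, eval_finsetSum, eval_mul, eval_C, eval_comp, eval_sub, eval_X, mul_comm]
    have hroot (m : ℤ) : W.IsRoot (t + m) := by
      rw [IsRoot.def, hW, ← Pi.zero_apply (M := fun _ => ℂ) (t + m), ← h, shiftSeries,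
        ← (Equiv.addRight m).tsum_eq, eq_comm]
      refine (tsum_congr fun l => ?_).trans
        (tsum_eq_sum (s := L) fun l hl => by rw [hL t rfl l hl, mul_zero])
      simp only [Equiv.coe_addRight]
      congr 2 <;> push_cast <;> ring
    have hW0 : W = 0 := W.eq_zero_of_infinite_isRoot <|
      (Set.infinite_range_of_injective ((add_right_injective (t : ℂ)).comp Int.cast_injective)).mono
        (Set.range_subset_iff.2 hroot)
    rw [← hW, hW0, eval_zero]
  refine Polynomial.funext fun w => ?_
  rw [eval_fourierPoly hΦ hs, eval_zero]
  exact fourier_intCast_eq_zero_of_tsum_eq_zero (by fun_prop) hs.mul_left (hperiodization w) n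

lemma fourierPoly_translateComb {ι : Type*} {I : Finset ι} {c : ι → ℂ} {s : ι → ℝ}
    (hΦ : Continuous Φ) (hs : HasCompactSupport Φ) (q : ℂ[X]) (n : ℤ) :
    fourierPoly (translateComb I c s Φ) q n =
      ∑ i ∈ I, C (c i * wave (s i) n) * taylor (-(s i : ℂ)) (fourierPoly Φ q n) := by
  refine Polynomial.funext fun w => ?_
  let f : ι → ℝ → ℂ := fun i x => c i * (q.eval (w - s i - x) * Φ x)
  have hf (i : ι) : Integrable (f i) := Continuous.integrable_of_hasCompactSupport
    (by fun_prop) hs.mul_left.mul_left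
  have hsum : (fun x : ℝ => q.eval (w - x) * translateComb I c s Φ x) =
      fun x => ∑ i ∈ I, f i (x - s i) := by
    funext x
    rw [translateComb, Finset.mul_sum]
    refine Finset.sum_congr rfl fun i _ => ?_
    simp only [f, Complex.ofReal_sub, sub_sub, add_sub_cancel]
    ring
  rw [eval_fourierPoly (continuous_translateComb hΦ) (hasCompactSupport_translateComb hs), hsum,
    fourier_sum_comp_sub_right hf, eval_finsetSum]
  refine Finset.sum_congr rfl fun i _ => ?_
  rw [fourier_const_mul, ← eval_fourierPoly hΦ hs, eval_mul, eval_C, taylor_eval, ← sub_eq_add_neg]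
  ring

lemma sum_wave_mul_hasseDeriv_fourierPoly_eq_zero {ι : Type*} {I : Finset ι} {c : ι → ℂ}
    {s : ι → ℝ} (hΦ : Continuous Φ) (hs : HasCompactSupport Φ)
    (h : translateComb I c s (shiftSeries (fun l => q.eval (l : ℂ)) Φ) = 0) (n : ℤ) (j : ℕ) :
    ∑ i ∈ I, c i * (wave (s i) n * (hasseDeriv j (fourierPoly Φ q n)).eval (-(s i : ℂ))) = 0 := by
  rw [← shiftSeries_translateComb hs] at h
  have hzero := fourierPoly_eq_zero_of_shiftSeries_eq_zero (continuous_translateComb hΦ)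
    (hasCompactSupport_translateComb hs) h n
  rw [fourierPoly_translateComb hΦ hs] at hzero
  simpa only [finsetSum_coeff, coeff_C_mul, taylor_coeff, mul_assoc, coeff_zero] using
    congrArg (coeff · j) hzero

end FourierPoly

/-! ### Finite differences -/

lemma fwdDiff_iter_comp_addMonoidHom {M M' G : Type*} [AddCommMonoid M] [AddCommMonoid M']
    [AddCommGroup G] (f : M' → G) (e : M →+ M') (h : M) (n : ℕ) :
    (Δ_[h])^[n] (f ∘ e) = (Δ_[e h])^[n] f ∘ e := by
  funext y
  simp only [fwdDiff_iter_eq_sum_shift, Function.comp_apply, map_add, map_nsmul]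

lemma fwdDiff_iter_mul_periodic {M R : Type*} [AddCommMonoid M] [Ring R] {h : M} {w : M → R}
    (hw : Function.Periodic w h) (f : M → R) (n : ℕ) : (Δ_[h])^[n] (f * w) = (Δ_[h])^[n] f * w := by
  induction n generalizing f with
  | zero => rfl
  | succ n ih =>
    rw [Function.iterate_succ_apply, Function.iterate_succ_apply, ← ih]
    congr 1
    funext y
    simp only [fwdDiff, Pi.mul_apply, hw y, sub_mul]

lemma eq_zero_of_fwdDiff_iter_eq_zero {G : Type*} [AddCommGroup G] {n : ℕ} {e : ℤ → G}
    (h : (Δ_[1])^[n] e = 0) (h0 : ∀ i < n, e i = 0) : e = 0 := by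
  induction n generalizing e with
  | zero => exact h
  | succ n ih =>
    have hdiff : Δ_[1] e = 0 := ih h fun i hi => by
      rw [fwdDiff, h0 i (hi.trans n.lt_succ_self), ← Nat.cast_succ, h0 (i + 1) (by lia), sub_zero]
    have hperiodic : Function.Periodic e 1 := fun l => sub_eq_zero.1 (congrFun hdiff l)
    funext l
    simpa only [smul_eq_mul, mul_one, Pi.zero_apply] using
      (hperiodic.zsmul_eq l).trans (h0 0 n.succ_pos)

section PolynomialDifference

variable {M R : Type*} [AddCommMonoid M] [CommRing R] {e : M →+ R} {h : M} {P : R[X]} {n : ℕ}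

lemma fwdDiff_iter_eval_eq_zero (he : e h = 1) (hP : P.degree < n) :
    (Δ_[h])^[n] (fun x => P.eval (e x)) = 0 := by
  refine (fwdDiff_iter_comp_addMonoidHom P.eval e h n).trans ?_
  rw [he]
  rcases eq_or_ne P 0 with rfl | hP0
  · have hfixed : Function.IsFixedPt (Δ_[(1 : R)]) (eval · (0 : R[X])) := by
      simp only [eval_zero, Function.IsFixedPt, fwdDiff_const]
    rw [hfixed.iterate n]
    exact funext fun x => eval_zero
  · rw [fwdDiff_iter_eq_zero_of_degree_lt ((natDegree_lt_iff_degree_lt hP0).2 hP)]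
    rfl

lemma fwdDiff_iter_eval_eq_const (he : e h = 1) (hP : P.degree = n) :
    (Δ_[h])^[n] (fun x => P.eval (e x)) = fun _ => P.leadingCoeff * n.factorial := by
  refine (fwdDiff_iter_comp_addMonoidHom P.eval e h n).trans ?_
  rw [he, ← natDegree_eq_of_degree_eq_some hP, fwdDiff_iter_degree_eq_factorial]
  rfl

end PolynomialDifference

lemma exists_polynomial_of_fwdDiff_iter_eq_zero {K : Type*} [Field K] [CharZero K] {n : ℕ}
    {b : ℤ → K} (h : (Δ_[1])^[n] b = 0) :
    ∃ q : K[X], q.degree < n ∧ b = fun l : ℤ => q.eval (l : K) := by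
  let q := Lagrange.interpolate (Finset.range n) (fun i : ℕ => (i : K)) fun i : ℕ => b i
  have hinj : Set.InjOn (fun i : ℕ => (i : K)) (Finset.range n) := Nat.cast_injective.injOn
  have hdeg : q.degree < n := by
    simpa only [Finset.card_range] using Lagrange.degree_interpolate_lt (fun i : ℕ => b i) hinj
  have hq : (Δ_[1])^[n] (fun l : ℤ => q.eval (l : K)) = 0 :=
    fwdDiff_iter_eval_eq_zero (e := Int.castAddHom K) Int.cast_one hdeg
  refine ⟨q, hdeg, ?_⟩
  rw [← add_neg_eq_zero, ← neg_one_smul ℤ]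
  refine eq_zero_of_fwdDiff_iter_eq_zero (n := n) ?_ fun i hi => ?_
  · rw [fwdDiff_iter_add, h, fwdDiff_iter_const_smul, hq, smul_zero, add_zero]
  · have heval := Lagrange.eval_interpolate_at_node (fun i : ℕ => b i) hinj (Finset.mem_range.2 hi)
    simp only [neg_one_smul, Pi.add_apply, Pi.neg_apply, Int.cast_natCast, q, heval, add_neg_cancel]

lemma fwdDiff_iter_shiftSeries {f : ℝ → ℂ} (hf : HasCompactSupport f) (b : ℤ → ℂ) (n : ℕ) :
    (Δ_[1])^[n] (shiftSeries b f) = shiftSeries ((Δ_[1])^[n] b) f := by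
  induction n generalizing b with
  | zero => rfl
  | succ n ih =>
    rw [Function.iterate_succ_apply, Function.iterate_succ_apply, ← ih]
    congr 1
    funext t
    have hshift : shiftSeries b f (t + 1) = ∑' l : ℤ, b (l + 1) * f (t - l) := by
      rw [shiftSeries, ← (Equiv.addRight (1 : ℤ)).tsum_eq]
      simp only [Equiv.coe_addRight, Int.cast_add, Int.cast_one, add_sub_add_right_eq_sub]
    rw [fwdDiff, hshift, shiftSeries, shiftSeries, ← Summable.tsum_sub]
    · simp only [fwdDiff, sub_mul]
    · exact summable_shiftSeries hf (fun l => b (l + 1)) t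
    · exact summable_shiftSeries hf b t

/-- Linear independence of the integer shifts of `f`. -/
def ShiftsLinearIndependent (f : ℝ → ℂ) : Prop := ∀ b : ℤ → ℂ, shiftSeries b f = 0 → b = 0

lemma exists_polynomial_of_shiftSeries_eq_sum_eval_mul_periodic {f : ℝ → ℂ}
    (hf : HasCompactSupport f) (hli : ShiftsLinearIndependent f) {d : ℕ} {ω : ℕ → ℝ → ℂ}
    (hper : ∀ k ≤ d, Function.Periodic (ω k) 1) (hω : ω d ≠ 0) {p : ℕ → ℂ[X]}
    (hdeg : ∀ k ≤ d, (p k).degree = k) {b : ℤ → ℂ}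
    (hb : shiftSeries b f = ∑ k ∈ Finset.range (d + 1), (fun t : ℝ => (p k).eval (t : ℂ)) * ω k) :
    ∃ q : ℂ[X], q.degree = d ∧ b = fun l : ℤ => q.eval (l : ℂ) := by
  have hiter (n : ℕ) : shiftSeries ((Δ_[1])^[n] b) f =
      ∑ k ∈ Finset.range (d + 1), (Δ_[1])^[n] (fun t : ℝ => (p k).eval (t : ℂ)) * ω k := by
    rw [← fwdDiff_iter_shiftSeries hf, hb, fwdDiff_iter_finsetSum]
    exact Finset.sum_congr rfl fun k hk =>
      fwdDiff_iter_mul_periodic (hper k (Finset.mem_range_succ_iff.1 hk)) _ n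
  have hlower {k n : ℕ} (hk : k ≤ d) (hkn : k < n) :
      (Δ_[1])^[n] (fun t : ℝ => (p k).eval (t : ℂ)) = 0 :=
    fwdDiff_iter_eval_eq_zero (e := Complex.ofRealHom.toAddMonoidHom) Complex.ofReal_one
      ((hdeg k hk).trans_lt (Nat.cast_lt.2 hkn))
  have hsucc : (Δ_[1])^[d + 1] b = 0 := by
    refine hli _ ((hiter (d + 1)).trans (Finset.sum_eq_zero fun k hk => ?_))
    rw [hlower (Finset.mem_range_succ_iff.1 hk) (Finset.mem_range.1 hk), zero_mul]
  have htop : shiftSeries ((Δ_[1])^[d] b) f =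
      (fun _ => (p d).leadingCoeff * d.factorial) * ω d := by
    rw [hiter, Finset.sum_range_succ, Finset.sum_eq_zero fun k hk => by
      rw [hlower (Finset.mem_range.1 hk).le (Finset.mem_range.1 hk), zero_mul], zero_add]
    congr 1
    exact fwdDiff_iter_eval_eq_const (e := Complex.ofRealHom.toAddMonoidHom) Complex.ofReal_one
      (hdeg d le_rfl)
  obtain ⟨q, hq, rfl⟩ := exists_polynomial_of_fwdDiff_iter_eq_zero hsucc
  refine ⟨q, (Order.le_of_lt_succ hq).eq_of_not_lt fun hlt => hω ?_, rfl⟩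
  have hzero : (Δ_[1])^[d] (fun l : ℤ => q.eval (l : ℂ)) = 0 :=
    fwdDiff_iter_eval_eq_zero (e := Int.castAddHom ℂ) Int.cast_one hlt
  rw [hzero] at htop
  have hp : (p d).leadingCoeff * d.factorial ≠ 0 := mul_ne_zero
    (leadingCoeff_ne_zero.2 fun h => by simpa [h] using hdeg d le_rfl)
    (Nat.cast_ne_zero.2 d.factorial_ne_zero)
  funext t
  simpa [shiftSeries, hp] using (congrFun htop t).symm

/-! ### Twisting away the exponential factor -/

/-- The twist `x ↦ e^{-λx} f(x)`, which moves `V_f` to a shift-invariant space again and the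
exponent `λ` of the theorem to `0`. -/
noncomputable def expTwist (lam : ℂ) (f : ℝ → ℂ) : ℝ → ℂ := fun x => Complex.exp (-(lam * x)) * f x

section ExpTwist

variable {lam : ℂ} {f : ℝ → ℂ}

lemma continuous_expTwist (hf : Continuous f) : Continuous (expTwist lam f) := by
  unfold expTwist
  fun_prop

lemma hasCompactSupport_expTwist (hf : HasCompactSupport f) : HasCompactSupport (expTwist lam f) :=
  hf.mul_left

lemma expTwist_eq_zero_iff : expTwist lam f = 0 ↔ f = 0 := by
  simp only [funext_iff, expTwist, Pi.zero_apply, mul_eq_zero, Complex.exp_ne_zero, false_or]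

lemma exp_mul_comp_sub (lam : ℂ) (f : ℝ → ℂ) (s x : ℝ) :
    Complex.exp (-(lam * x)) * f (x - s) = Complex.exp (-(lam * s)) * expTwist lam f (x - s) := by
  rw [expTwist, ← mul_assoc, ← Complex.exp_add]
  congr 2
  push_cast
  ring

lemma expTwist_translateComb {ι : Type*} (I : Finset ι) (c : ι → ℂ) (s : ι → ℝ) :
    expTwist lam (translateComb I c s f) =
      translateComb I (fun i => c i * Complex.exp (-(lam * s i))) s (expTwist lam f) := by
  funext x
  simp only [expTwist.eq_def _ (translateComb _ _ _ _), translateComb, Finset.mul_sum,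
    mul_left_comm _ (c _), exp_mul_comp_sub, mul_assoc]

lemma expTwist_shiftSeries (lam : ℂ) (a : ℤ → ℂ) (f : ℝ → ℂ) :
    expTwist lam (shiftSeries a f) =
      shiftSeries (fun l => a l * Complex.exp (-(lam * l))) (expTwist lam f) := by
  funext x
  have hcomp (l : ℤ) := exp_mul_comp_sub lam f l x
  simp only [Complex.ofReal_intCast] at hcomp
  simp only [expTwist.eq_def _ (shiftSeries _ _), shiftSeries, ← tsum_mul_left,
    mul_left_comm _ (a _), hcomp, mul_assoc]

lemma expTwist_exp_mul (lam : ℂ) (h : ℝ → ℂ) :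
    expTwist lam (fun t => Complex.exp (lam * t) * h t) = h := by
  funext t
  rw [expTwist, ← mul_assoc, ← Complex.exp_add, neg_add_cancel, Complex.exp_zero, one_mul]

lemma ShiftsLinearIndependent.expTwist (hf : ShiftsLinearIndependent f) (lam : ℂ) :
    ShiftsLinearIndependent (expTwist lam f) := by
  intro b hb
  have hzero : shiftSeries (fun l => b l * Complex.exp (lam * l)) f = 0 := by
    rw [← expTwist_eq_zero_iff (lam := lam), expTwist_shiftSeries, ← hb]
    simp only [mul_assoc, ← Complex.exp_add, add_neg_cancel, Complex.exp_zero, mul_one]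
  funext l
  exact (mul_eq_zero.1 (congrFun (hf _ hzero) l)).resolve_right (Complex.exp_ne_zero _)

lemma fourierExt_expTwist (lam : ℂ) (f : ℝ → ℂ) (z : ℂ) :
    fourierExt (expTwist lam f) z = fourierExt f (-(Complex.I * lam) / (2 * Real.pi) + z) := by
  refine integral_congr_ae (.of_forall fun x => ?_)
  simp only [expTwist]
  rw [mul_right_comm, ← Complex.exp_add, mul_comm]
  congr 2
  field_simp
  linear_combination -(x : ℂ) * lam * Complex.I_sq

lemma iteratedDeriv_fourierExt_expTwist (lam : ℂ) (f : ℝ → ℂ) (k : ℕ) (z : ℂ) :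
    iteratedDeriv k (fourierExt (expTwist lam f)) z =
      iteratedDeriv k (fourierExt f) (-(Complex.I * lam) / (2 * Real.pi) + z) := by
  rw [funext (fourierExt_expTwist lam f), iteratedDeriv_comp_const_add]

lemma exists_polynomial_of_shiftSeries_eq_exp_mul_sum (hf : HasCompactSupport f)
    (hli : ShiftsLinearIndependent f) {d : ℕ} {ω : ℕ → ℝ → ℂ}
    (hper : ∀ k ≤ d, Function.Periodic (ω k) 1) (hω : ω d ≠ 0) {p : ℕ → ℂ[X]}
    (hdeg : ∀ k ≤ d, (p k).degree = k) {a : ℤ → ℂ}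
    (ha : shiftSeries a f = fun t : ℝ => Complex.exp (lam * t) *
      ∑ k ∈ Finset.range (d + 1), (p k).eval (t : ℂ) * ω k t) :
    ∃ q : ℂ[X], q.degree = d ∧
      (fun l : ℤ => a l * Complex.exp (-(lam * l))) = fun l : ℤ => q.eval (l : ℂ) := by
  refine exists_polynomial_of_shiftSeries_eq_sum_eval_mul_periodic
    (hasCompactSupport_expTwist hf) (hli.expTwist lam) hper hω hdeg ?_
  rw [← expTwist_shiftSeries, ha, expTwist_exp_mul]
  funext t
  simp only [Finset.sum_apply, Pi.mul_apply]

lemma analyticOnNhd_exp_mul_sum_eval_mul {ι : Type*} {I : Finset ι} {ω : ι → ℝ → ℂ}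
    (hω : ∀ k ∈ I, ∀ t, AnalyticAt ℝ (ω k) t) (lam : ℂ) (p : ι → ℂ[X]) :
    AnalyticOnNhd ℝ (fun t : ℝ => Complex.exp (lam * t) *
      ∑ k ∈ I, (p k).eval (t : ℂ) * ω k t) Set.univ := fun t _ => by
  have hofReal : AnalyticAt ℝ (fun t : ℝ => (t : ℂ)) t := Complex.ofRealCLM.analyticAt t
  have hexp : AnalyticAt ℝ (fun t : ℝ => Complex.exp (lam * t)) t :=
    analyticAt_cexp.restrictScalars.fun_comp (analyticAt_const.fun_mul hofReal)
  refine hexp.fun_mul (Finset.analyticAt_fun_sum _ fun k hk => ?_)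
  exact (AnalyticAt.aeval_polynomial hofReal (p k)).mul (hω k hk t)

lemma exists_sum_wave_mul_hasseDeriv_fourierPoly_expTwist_eq_zero {ι : Type*} [Fintype ι]
    {c : ι → ℂ} {s : ι → ℝ} {a : ℤ → ℂ} {q : ℂ[X]} (hf : Continuous f)
    (hs : HasCompactSupport f)
    (ha : (fun l : ℤ => a l * Complex.exp (-(lam * l))) = fun l : ℤ => q.eval (l : ℂ))
    (hc : c ≠ 0) (h : translateComb Finset.univ c s (shiftSeries a f) = 0) :
    ∃ c' : ι → ℂ, c' ≠ 0 ∧ ∀ (n : ℤ) (j : ℕ), ∑ i, c' i * (wave (s i) n *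
      (hasseDeriv j (fourierPoly (expTwist lam f) q n)).eval (-(s i : ℂ))) = 0 := by
  refine ⟨fun i => c i * Complex.exp (-(lam * s i)), fun h0 => hc (funext fun i => ?_),
    fun n j => ?_⟩
  · exact (mul_eq_zero.1 (congrFun h0 i)).resolve_right (Complex.exp_ne_zero _)
  · rw [← expTwist_eq_zero_iff (lam := lam), expTwist_translateComb, expTwist_shiftSeries, ha] at h
    exact sum_wave_mul_hasseDeriv_fourierPoly_eq_zero (continuous_expTwist hf)
      (hasCompactSupport_expTwist hs) h n j

end ExpTwist

/-! ### Exponential polynomials -/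

lemma linearIndependent_of_injective_natDegree {ι K : Type*} [Field K] {P : ι → K[X]}
    (hP : ∀ i, P i ≠ 0) (hinj : Function.Injective fun i => (P i).natDegree) :
    LinearIndependent K P := by
  refine linearIndependent_iff'.2 fun S g hg i hi => by_contra fun hgi => ?_
  have hdegree {k : ι} (hk : g k • P k ≠ 0) : (g k • P k).degree = (P k).natDegree := by
    rw [degree_smul_of_smul_regular _ (IsSMulRegular.of_ne_zero (left_ne_zero_of_smul hk)),
      degree_eq_natDegree (hP k)]
  have hsup := degree_sum_eq_of_disjoint (fun k => g k • P k) S fun k hk l hl hkl => by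
    simpa only [Function.onFun, Function.comp_apply, hdegree hk.2, hdegree hl.2, ne_eq,
      Nat.cast_inj] using hinj.ne hkl
  rw [hg, degree_zero, eq_comm, Finset.sup_eq_bot_iff] at hsup
  exact smul_ne_zero hgi (hP i) (degree_eq_bot.1 (hsup i hi))

lemma linearIndependent_wave : LinearIndependent ℂ wave := by
  let χ (s : ℝ) : Multiplicative ℝ →* ℂ :=
    { toFun := fun y => wave s y.toAdd
      map_one' := by simp [wave]
      map_mul' := fun x y => by
        rw [toAdd_mul, wave_comm, wave_add, Pi.mul_apply, wave_comm s, wave_comm s] }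
  refine (linearIndependent_monoidHom (Multiplicative ℝ) ℂ).comp χ fun s t hst => ?_
  by_contra hne
  have heq : wave s (2 * (s - t))⁻¹ = wave t (2 * (s - t))⁻¹ := DFunLike.congr_fun hst _
  have hneg : wave (s - t) (2 * (s - t))⁻¹ = -1 := by
    rw [wave_eq_exp_ofReal_mul_I, mul_inv_rev, mul_inv_cancel_left₀ (sub_ne_zero.2 hne),
      mul_comm 2 Real.pi, mul_inv_cancel_right₀ two_ne_zero, Complex.ofReal_neg, neg_mul,
      Complex.exp_neg, Complex.exp_pi_mul_I, inv_neg_one]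
  rw [← sub_add_cancel s t, wave_add, Pi.mul_apply, sub_add_cancel, hneg, neg_one_mul,
    neg_eq_self] at heq
  simpa only [heq, norm_zero, zero_ne_one] using norm_wave t (2 * (s - t))⁻¹

lemma eq_zero_of_sum_wave_mul_eval_eq_zero {T : Finset ℤ} {Q : ℤ → ℂ[X]}
    (h : ∀ s : ℝ, ∑ n ∈ T, wave s n * (Q n).eval (-(s : ℂ)) = 0) : ∀ n ∈ T, Q n = 0 := by
  have hpoly (s : ℝ) : ∑ n ∈ T, C (wave s n) * Q n = 0 := by
    refine eq_zero_of_infinite_isRoot _ <| (Set.infinite_range_of_injective <|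
      neg_injective.comp ((add_right_injective (s : ℂ)).comp Int.cast_injective)).mono ?_
    rintro _ ⟨m, rfl⟩
    have hm := h (s + m)
    simp only [wave_add, Pi.mul_apply, wave_intCast_intCast, mul_one] at hm
    simpa [eval_finsetSum] using! hm
  intro n hn
  ext k
  have hcoeff : ∑ m ∈ T, (Q m).coeff k • wave m = 0 := by
    funext s
    simpa [wave_comm s, mul_comm] using congrArg (coeff · k) (hpoly s)
  exact linearIndependent_iff'.1 (linearIndependent_wave.comp _ Int.cast_injective) T
    (fun m => (Q m).coeff k) hcoeff n hn

lemma linearIndependent_wave_mul_eval {ι : Type*} {n : ι → ℤ} {P : ι → ℂ[X]} (hP : ∀ i, P i ≠ 0)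
    (hinj : Function.Injective fun i => (n i, (P i).natDegree)) :
    LinearIndependent ℂ fun i (s : ℝ) => wave s (n i) * (P i).eval (-(s : ℂ)) := by
  classical
  refine linearIndependent_iff'.2 fun S g hg i hi => ?_
  let Q : ℤ → ℂ[X] := fun m => ∑ k ∈ S with n k = m, g k • P k
  have hQ : Q (n i) = 0 := by
    refine eq_zero_of_sum_wave_mul_eval_eq_zero (T := S.image n) (fun s => ?_) _
      (Finset.mem_image_of_mem n hi)
    have hs := congrFun hg s
    rw [← Finset.sum_fiberwise_of_maps_to fun k => Finset.mem_image_of_mem n,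
      Finset.sum_apply, Pi.zero_apply] at hs
    rw [← hs]
    refine Finset.sum_congr rfl fun m _ => ?_
    rw [eval_finsetSum, Finset.mul_sum, Finset.sum_apply]
    refine Finset.sum_congr rfl fun k hk => ?_
    rw [← (Finset.mem_filter.1 hk).2, eval_smul, Pi.smul_apply, smul_eq_mul, smul_eq_mul,
      mul_left_comm]
  have hfiber : LinearIndependent ℂ fun k : {k // n k = n i} => P k :=
    linearIndependent_of_injective_natDegree (fun k => hP k) fun k l hkl =>
      Subtype.ext (hinj (Prod.ext (k.2.trans l.2.symm) hkl))
  exact linearIndepOn_iff'.1 hfiber (S.filter (n · = n i)) g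
    (fun k hk => (Finset.mem_filter.1 hk).2) hQ i (Finset.mem_filter.2 ⟨hi, rfl⟩)

lemma exists_linearIndependent_eval_of_dense {ι X 𝕜 : Type*} [Fintype ι] [TopologicalSpace X]
    [Field 𝕜] [TopologicalSpace 𝕜] [IsTopologicalRing 𝕜] [T2Space 𝕜] {f : ι → X → 𝕜}
    (hf : ∀ i, Continuous (f i)) (hli : LinearIndependent 𝕜 f) {D : Set X} (hD : Dense D) {n : ℕ}
    (hn : Fintype.card ι = n) :
    ∃ s : Fin n → X, (∀ j, s j ∈ D) ∧ LinearIndependent 𝕜 fun j i => f i (s j) := by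
  have hrestrict : LinearIndependent 𝕜 fun i (x : D) => f i x := by
    refine Fintype.linearIndependent_iff.2 fun g hg => Fintype.linearIndependent_iff.1 hli g ?_
    refine Continuous.ext_on hD ?_ continuous_zero fun x hx => ?_
    · simp only [Finset.sum_fn, Pi.smul_def]
      exact continuous_finsetSum _ fun i _ => (hf i).const_mul (g i)
    · simpa only [Finset.sum_apply, Pi.smul_apply, Pi.zero_apply] using congrFun hg ⟨x, hx⟩
  obtain ⟨v, hv, -, hvli⟩ :=
    Submodule.exists_fun_fin_finrank_span_eq 𝕜 (Set.range (flip fun i (x : D) => f i x))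
  choose s hs using hv
  have hrank : Module.finrank 𝕜 (Submodule.span 𝕜 (Set.range (flip fun i (x : D) => f i x))) =
      n := by
    rw [span_flip_eq_top_iff_linearIndependent.2 hrestrict, finrank_top,
      Module.finrank_fintype_fun_eq_card, hn]
  let e : Fin n ≃ Fin _ := finCongr hrank.symm
  rw [← funext hs] at hvli
  exact ⟨fun j => s (e j), fun j => (s (e j)).2, hvli.comp e e.injective⟩

/-! ### Counting the nonzero derivatives -/

lemma exists_hasseDeriv_natDegree_eq {K : Type*} [Field K] [CharZero K] {R : K[X]} (hR : R ≠ 0)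
    {m : ℕ} (hm : m ≤ R.natDegree) :
    ∃ j, hasseDeriv j R ≠ 0 ∧ (hasseDeriv j R).natDegree = m := by
  refine ⟨R.natDegree - m, fun h => ?_, by rw [natDegree_hasseDeriv, Nat.sub_sub_self hm]⟩
  have hcoeff := congrArg (coeff · m) h
  simp only [hasseDeriv_coeff, Nat.add_sub_cancel' hm, coeff_natDegree, coeff_zero, mul_eq_zero,
    Nat.cast_eq_zero, leadingCoeff_eq_zero, hR, or_false] at hcoeff
  exact (Nat.choose_pos (Nat.sub_le _ _)).ne' hcoeff

lemma fourierPoly_ne_zero_and_le_natDegree {Φ : ℝ → ℂ} {q : ℂ[X]} (hq : q ≠ 0) {k : ℕ}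
    (hk : k ≤ q.natDegree) {n : ℤ} (h : iteratedDeriv k (fourierExt Φ) n ≠ 0) :
    fourierPoly Φ q n ≠ 0 ∧ q.natDegree - k ≤ (fourierPoly Φ q n).natDegree := by
  classical
  have hex : ∃ k, iteratedDeriv k (fourierExt Φ) n ≠ 0 := ⟨k, h⟩
  let k₀ := Nat.find hex
  have hk₀k : k₀ ≤ k := Nat.find_min' hex h
  have hcoeff : (fourierPoly Φ q n).coeff (q.natDegree - k₀) ≠ 0 := by
    have hk₀q : k₀ ≤ q.natDegree := hk₀k.trans hk
    simp only [fourierPoly, finsetSum_coeff, coeff_C_mul, hasseDeriv_coeff]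
    rw [Finset.sum_eq_single_of_mem k₀ (Finset.mem_range_succ_iff.2 hk₀q) fun l _ hl => ?_]
    · rw [Nat.sub_add_cancel hk₀q]
      exact mul_ne_zero (mul_ne_zero (inv_ne_zero (pow_ne_zero _ Complex.two_pi_I_ne_zero))
        (Nat.find_spec hex)) (mul_ne_zero (Nat.cast_ne_zero.2 (Nat.choose_pos hk₀q).ne')
        (leadingCoeff_ne_zero.2 hq))
    · rcases hl.lt_or_gt with hlt | hgt
      · rw [not_not.1 (Nat.find_min hex hlt), mul_zero, zero_mul]
      · rw [coeff_eq_zero_of_natDegree_lt (by lia), mul_zero, mul_zero]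
  exact ⟨fun h0 => hcoeff (by rw [h0, coeff_zero]),
    (Nat.sub_le_sub_left hk₀k _).trans (le_natDegree_of_ne_zero hcoeff)⟩

theorem encard_iteratedDeriv_fourierExt_ne_zero_le {Φ : ℝ → ℂ} {q : ℂ[X]} {N : ℕ} (hq : q ≠ 0)
    (hdep : ∀ s : Fin (N + 1) → ℝ, (∀ i, s i ∈ dyadics) → ∃ c : Fin (N + 1) → ℂ, c ≠ 0 ∧
      ∀ (n : ℤ) (j : ℕ), ∑ i, c i *
        (wave (s i) n * (hasseDeriv j (fourierPoly Φ q n)).eval (-(s i : ℂ))) = 0) :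
    {x : ℕ × ℤ | x.1 ≤ q.natDegree ∧ iteratedDeriv x.1 (fourierExt Φ) x.2 ≠ 0}.encard ≤ N := by
  by_contra! hlt
  obtain ⟨T, hT, hcard⟩ := Set.exists_subset_encard_eq (Order.add_one_le_of_lt hlt)
  have hfin : T.Finite := Set.finite_of_encard_eq_coe (k := N + 1) hcard
  have : Fintype T := hfin.fintype
  have hcardT : Fintype.card T = N + 1 := by
    exact_mod_cast (Set.coe_fintypeCard T).trans hcard
  have hderiv (x : T) : ∃ j, hasseDeriv j (fourierPoly Φ q x.1.2) ≠ 0 ∧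
      (hasseDeriv j (fourierPoly Φ q x.1.2)).natDegree = q.natDegree - x.1.1 :=
    have ⟨h0, hle⟩ := fourierPoly_ne_zero_and_le_natDegree hq (hT x.2).1 (hT x.2).2
    exists_hasseDeriv_natDegree_eq h0 hle
  choose j hj0 hjdeg using hderiv
  have hli := linearIndependent_wave_mul_eval (n := fun x : T => x.1.2) hj0 fun x y hxy => by
    obtain ⟨hn, hdeg⟩ := Prod.ext_iff.1 hxy
    simp only [hjdeg] at hn hdeg
    have := (hT x.2).1
    have := (hT y.2).1
    exact Subtype.ext (Prod.ext (by lia) hn)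
  have hcont (x : T) : Continuous fun s : ℝ =>
      wave s x.1.2 * (hasseDeriv (j x) (fourierPoly Φ q x.1.2)).eval (-(s : ℂ)) := by
    have := continuous_wave x.1.2
    simp only [wave_comm _ (x.1.2 : ℝ)]
    fun_prop
  obtain ⟨s, hs, hsli⟩ := exists_linearIndependent_eval_of_dense hcont hli dense_dyadics hcardT
  obtain ⟨c, hc0, hc⟩ := hdep s hs
  refine hc0 (funext (Fintype.linearIndependent_iff.1 hsli c (funext fun x => ?_)))
  simpa only [Finset.sum_apply, Pi.smul_apply, smul_eq_mul] using! hc x.1.2 (j x)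

/-! ### Masks as polynomials in a wave -/

/-- The polynomial `∑_{m ≤ N} b_m X^m`, whose value at `e^{-2πiy}` is the trigonometric polynomial
`∑_{m ≤ N} b_m e^{-2πimy}`. -/
noncomputable def maskPoly (N : ℕ) (b : ℕ → ℂ) : ℂ[X] :=
  ∑ m ∈ Finset.range (N + 1), monomial m (b m)

lemma natDegree_maskPoly_le (N : ℕ) (b : ℕ → ℂ) : (maskPoly N b).natDegree ≤ N :=
  natDegree_sum_le_of_forall_le _ _ fun _ hm =>
    (natDegree_monomial_le _).trans (Finset.mem_range_succ_iff.1 hm)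

lemma eval_wave_one_maskPoly (N : ℕ) (b : ℕ → ℂ) (y : ℝ) :
    (maskPoly N b).eval (wave 1 y) = ∑ m ∈ Finset.range (N + 1),
      b m * Complex.exp (-(2 * (Real.pi : ℂ) * Complex.I * (m : ℂ) * y)) := by
  rw [maskPoly, eval_finsetSum]
  refine Finset.sum_congr rfl fun m _ => ?_
  rw [eval_monomial, ← Pi.pow_apply, ← wave_natCast_mul, mul_one, wave, Complex.ofReal_natCast]

lemma exists_wave_one_eq {w : ℂ} (hw : ‖w‖ = 1) : ∃ y, wave 1 y = w := by
  obtain ⟨θ, rfl⟩ := Complex.norm_eq_one_iff w |>.1 hw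
  refine ⟨-θ / (2 * Real.pi), ?_⟩
  rw [wave_eq_exp_ofReal_mul_I]
  congr 3
  field_simp

lemma norm_eval_le_of_norm_eval_wave_one_le {P : ℂ[X]} {C : ℝ}
    (hP : ∀ y, ‖P.eval (wave 1 y)‖ ≤ C) {w : ℂ} (hw : ‖w‖ = 1) : ‖P.eval w‖ ≤ C := by
  obtain ⟨y, rfl⟩ := exists_wave_one_eq hw
  exact hP y

lemma prod_Icc_eq_maskProd {P : ℕ → ℂ[X]} {A : ℕ → ℂ → ℂ}
    (hA : ∀ j (y : ℝ), (P j).eval (wave 1 y) = A j y) (J : ℕ) (y : ℝ) :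
    ∏ j ∈ Finset.Icc 1 J, A j ((2 : ℂ) ^ (-(j : ℤ)) * y) =
      maskProd (fun i => P (i + 1)) (Finset.range J) y := by
  rw [maskProd, Finset.prod_apply, ← Finset.Ico_succ_right_eq_Icc, Finset.prod_Ico_eq_prod_range]
  refine Finset.prod_congr rfl fun i _ => ?_
  have hscale : (2 : ℂ) ^ (-((1 + i : ℕ) : ℤ)) * y = ((2⁻¹ ^ (i + 1) * y : ℝ) : ℂ) := by
    rw [zpow_neg, zpow_natCast, add_comm]
    push_cast
    rw [inv_pow]
  rw [hscale, ← hA, add_comm 1 i, wave_eq_exp_ofReal_mul_I, wave_eq_exp_ofReal_mul_I, one_mul]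

/-- Let `φ̂(z) = Π_{j=1}^∞ a_j(2^{−j}z)` with trigonometric polynomials `a_j` of
degree ≤ N, `a_j(0) = 1`, `sup_ℝ|a_j| ≤ C`, `φ` continuous integrable compactly supported with
linearly independent integer shifts. If the analytic function
`g(t) = e^{λt} Σ_{k=0}^d p_k(t)·ω_k(t)` (with `d ≤ N`, `ω_k` 1-periodic analytic, `ω_d ≢ 0`,
`deg p_k = k`) belongs to `V_φ`, then the sequences `{φ̂^{(k)}(−iλ/(2π)+ℓ) : ℓ ∈ ℤ}`,
`k = 0,…,d`, contain all together at most `N` nonzero elements. -/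
theorem stmt_17 (N : ℕ) (C : ℝ) (hC : 0 < C)
    (coef : ℕ → ℕ → ℂ) (A : ℕ → ℂ → ℂ)
    (hA : ∀ j : ℕ, ∀ y : ℂ, A j y =
      ∑ m ∈ Finset.range (N + 1), coef j m * Complex.exp (-(2 * (Real.pi : ℂ) * Complex.I * (m : ℂ) * y)))
    (hA0 : ∀ j : ℕ, A j 0 = 1)
    (hAbd : ∀ j : ℕ, ∀ y : ℝ, ‖A j ((y : ℂ))‖ ≤ C)
    (φ : ℝ → ℂ) (hcont : Continuous φ) (hint : Integrable φ) (hsupp : HasCompactSupport φ)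
    (hli : ∀ b : ℤ → ℂ, (∀ t : ℝ, ∑' ℓ : ℤ, b ℓ * φ (t - (ℓ : ℝ)) = 0) → ∀ ℓ, b ℓ = 0)
    (hprod : ∀ z : ℂ, Filter.Tendsto
      (fun J : ℕ => ∏ j ∈ Finset.Icc 1 J, A j ((2 : ℂ) ^ (-(j : ℤ)) * z))
      Filter.atTop (nhds (fourierExt φ z)))
    (lam : ℂ) (d : ℕ) (hd : d ≤ N) (ω : ℕ → ℝ → ℂ)
    (hper : ∀ k ≤ d, ∀ t : ℝ, ω k (t + 1) = ω k t)
    (hana : ∀ k ≤ d, ∀ x : ℝ, AnalyticAt ℝ (ω k) x)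
    (hωd : ∃ t : ℝ, ω d t ≠ 0)
    (p : ℕ → Polynomial ℂ) (hdeg : ∀ k ≤ d, (p k).degree = k)
    (a : ℤ → ℂ)
    (hg : ∀ t : ℝ,
      Complex.exp (lam * (t : ℂ)) * ∑ k ∈ Finset.range (d + 1), (p k).eval (t : ℂ) * ω k t
        = ∑' ℓ : ℤ, a ℓ * φ (t - (ℓ : ℝ))) :
    ({x : ℕ × ℤ | x.1 ≤ d ∧ iteratedDeriv x.1 (fourierExt φ)
        (-(Complex.I * lam) / (2 * (Real.pi : ℂ)) + (x.2 : ℂ)) ≠ 0}).Finite ∧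
      ({x : ℕ × ℤ | x.1 ≤ d ∧ iteratedDeriv x.1 (fourierExt φ)
        (-(Complex.I * lam) / (2 * (Real.pi : ℂ)) + (x.2 : ℂ)) ≠ 0}).ncard ≤ N := by
  have hP (j) (y : ℝ) : (maskPoly N (coef j)).eval (wave 1 y) = A j y := by
    rw [eval_wave_one_maskPoly, hA]
  have hP0 (j) : (maskPoly N (coef j)).eval 1 = 1 := by
    simpa only [wave_comm 1, wave_zero, Pi.one_apply, Complex.ofReal_zero, hA0] using hP j 0
  have hPC (j w) (hw : ‖w‖ = 1) : ‖(maskPoly N (coef j)).eval w‖ ≤ C :=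
    norm_eval_le_of_norm_eval_wave_one_le (fun y => hP j y ▸ hAbd j y) hw
  have hlim (y : ℝ) := hprod y
  simp only [prod_Icc_eq_maskProd hP, fourierExt_ofReal] at hlim
  have hgφ : shiftSeries a φ = fun t : ℝ => Complex.exp (lam * t) *
      ∑ k ∈ Finset.range (d + 1), (p k).eval (t : ℂ) * ω k t := funext fun t => (hg t).symm
  have hgana : AnalyticOnNhd ℝ (shiftSeries a φ) Set.univ := hgφ ▸
    analyticOnNhd_exp_mul_sum_eval_mul (fun k hk => hana k (Finset.mem_range_succ_iff.1 hk)) lam p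
  obtain ⟨q, hqd, hq⟩ := exists_polynomial_of_shiftSeries_eq_exp_mul_sum hsupp
    (fun b hb => funext (hli b (congrFun hb))) hper (Function.ne_iff.2 hωd) hdeg hgφ
  rw [← Set.encard_le_coe_iff_finite_ncard_le, ← natDegree_eq_of_degree_eq_some hqd]
  simp only [← iteratedDeriv_fourierExt_expTwist]
  refine encard_iteratedDeriv_fourierExt_ne_zero_le (by rintro rfl; simp at hqd) fun s hs => ?_
  obtain ⟨c, hc, hzero⟩ := exists_translateComb_shiftSeries_eq_zero (fun i =>
    natDegree_maskPoly_le N _) (fun i => hP0 _) (fun i => hPC _) hlim hcont hsupp hgana hs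
  exact exists_sum_wave_mul_hasseDeriv_fourierPoly_expTwist_eq_zero hcont hsupp hq hc hzero
end

section
/- For each j ∈ ℕ let a_j : ℂ → ℂ be a trigonometric polynomial (a finite sum a_j(y) = Σ_m a_{j,m}·e^{−2πi m y}, hence 1-periodic: a_j(y+1) = a_j(y) for all y ∈ ℂ), and let F : ℂ → ℂ satisfy F(z) = Π_{j=1}^∞ a_j(2^{−j} z) for all z ∈ ℂ, where the infinite product is the pointwise limit of the partial products. Let α ∈ ℂ and assume the generalized zero condition a_j(2^{−j}·α + 1/2) = 0 for every j ∈ ℕ. Then F(α + β) = 0 for every β ∈ ℤ ∖ {0} (the generalized Strang–Fix condition). -/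
/-!
Write a nonzero integer as `β = 2 ^ k * (2 * n + 1)`. At scale `j = k + 1` the translation by `β`
becomes `2 ^ (-j) * β = 1 / 2 + n`, so 1-periodicity and the zero condition kill the `j`-th factor
of the product at `α + β`. Hence the partial products there are eventually zero.
-/

theorem exists_int_eq_two_pow_mul_odd {β : ℤ} (hβ : β ≠ 0) :
    ∃ (k : ℕ) (m : ℤ), Odd m ∧ β = 2 ^ k * m := by
  have hfin : FiniteMultiplicity (2 : ℤ) β := Int.finiteMultiplicity_iff.2 ⟨by decide, hβ⟩
  obtain ⟨m, hβm, hm⟩ := hfin.exists_eq_pow_mul_and_not_dvd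
  exact ⟨_, m, Int.not_even_iff_odd.1 (mt Even.two_dvd hm), hβm⟩

theorem eq_zero_of_tendsto_prod_of_factor_eq_zero {ι κ M : Type*} [CommMonoidWithZero M]
    [TopologicalSpace M] [T1Space M] {l : Filter ι} [l.NeBot] {s : ι → Finset κ} {f : κ → M}
    {j : κ} {x : M} (hx : Filter.Tendsto (fun i => ∏ k ∈ s i, f k) l (nhds x))
    (hj : ∀ᶠ i in l, j ∈ s i) (hfj : f j = 0) : x = 0 := by
  have hprod : ∀ᶠ i in l, ∏ k ∈ s i, f k = 0 :=
    hj.mono fun _ hmem => Finset.prod_eq_zero hmem hfj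
  exact (tendsto_const_nhds_iff.1 (hx.congr' hprod)).symm

section DyadicDilation

variable {K : Type*} [Field K] [NeZero (2 : K)]

theorem two_zpow_neg_succ_mul_two_pow_mul_odd (k : ℕ) (n : ℤ) :
    (2 : K) ^ (-((k + 1 : ℕ) : ℤ)) * ((2 ^ k * (2 * n + 1) : ℤ) : K) = 1 / 2 + n := by
  rw [zpow_neg, zpow_natCast]
  push_cast
  field_simp
  ring

theorem exists_dilated_factor_eq_zero {M : Type*} [Zero M] {a : ℕ → K → M}
    (hper : ∀ j : ℕ, 1 ≤ j → Function.Periodic (a j) 1) {α : K}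
    (hzero : ∀ j : ℕ, 1 ≤ j → a j ((2 : K) ^ (-(j : ℤ)) * α + 1 / 2) = 0)
    {β : ℤ} (hβ : β ≠ 0) :
    ∃ j : ℕ, 1 ≤ j ∧ a j ((2 : K) ^ (-(j : ℤ)) * (α + β)) = 0 := by
  obtain ⟨k, _, ⟨n, rfl⟩, rfl⟩ := exists_int_eq_two_pow_mul_odd hβ
  have hk : 1 ≤ k + 1 := k.succ_pos
  refine ⟨k + 1, hk, ?_⟩
  calc a (k + 1) ((2 : K) ^ (-((k + 1 : ℕ) : ℤ)) * (α + (2 ^ k * (2 * n + 1) : ℤ)))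
      = a (k + 1) ((2 : K) ^ (-((k + 1 : ℕ) : ℤ)) * α + 1 / 2 + n) := by
        rw [mul_add, two_zpow_neg_succ_mul_two_pow_mul_odd, ← add_assoc]
    _ = a (k + 1) ((2 : K) ^ (-((k + 1 : ℕ) : ℤ)) * α + 1 / 2) := by
        simpa only [mul_one] using (hper (k + 1) hk).int_mul n _
    _ = 0 := hzero (k + 1) hk

theorem stmt_19_general {M : Type*} [CommMonoidWithZero M] [TopologicalSpace M] [T1Space M]
    (a : ℕ → K → M) (hper : ∀ j : ℕ, 1 ≤ j → Function.Periodic (a j) 1) (F : K → M)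
    (hF : ∀ z : K, Filter.Tendsto
      (fun J : ℕ => ∏ j ∈ Finset.Icc 1 J, a j ((2 : K) ^ (-(j : ℤ)) * z))
      Filter.atTop (nhds (F z)))
    (α : K) (hzero : ∀ j : ℕ, 1 ≤ j → a j ((2 : K) ^ (-(j : ℤ)) * α + 1 / 2) = 0)
    (β : ℤ) (hβ : β ≠ 0) : F (α + β) = 0 := by
  obtain ⟨j, hj, hfactor⟩ := exists_dilated_factor_eq_zero hper hzero hβ
  have hmem : ∀ᶠ J : ℕ in Filter.atTop, j ∈ Finset.Icc 1 J :=
    (Filter.eventually_ge_atTop j).mono fun _ hJ => Finset.mem_Icc.2 ⟨hj, hJ⟩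
  exact eq_zero_of_tendsto_prod_of_factor_eq_zero (hF (α + β)) hmem hfactor

end DyadicDilation

/-- If `F(z) = Π_{j=1}^∞ a_j(2^{−j}z)` for 1-periodic trigonometric polynomials
`a_j : ℂ → ℂ` and `a_j(2^{−j}·α + 1/2) = 0` for every `j ≥ 1` (generalized zero condition),
then `F(α+β) = 0` for every `β ∈ ℤ ∖ {0}` (generalized Strang–Fix condition). -/
theorem stmt_19 (a : ℕ → ℂ → ℂ)
    (htrig : ∀ j : ℕ, 1 ≤ j → ∃ (S : Finset ℤ) (c : ℤ → ℂ), ∀ y : ℂ,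
      a j y = ∑ m ∈ S, c m * Complex.exp (-(2 * (Real.pi : ℂ) * Complex.I * (m : ℂ) * y)))
    (hper : ∀ j : ℕ, 1 ≤ j → ∀ y : ℂ, a j (y + 1) = a j y)
    (F : ℂ → ℂ)
    (hF : ∀ z : ℂ, Filter.Tendsto
      (fun J : ℕ => ∏ j ∈ Finset.Icc 1 J, a j ((2 : ℂ) ^ (-(j : ℤ)) * z))
      Filter.atTop (nhds (F z)))
    (α : ℂ)
    (hzero : ∀ j : ℕ, 1 ≤ j → a j ((2 : ℂ) ^ (-(j : ℤ)) * α + 1 / 2) = 0) :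
    ∀ β : ℤ, β ≠ 0 → F (α + (β : ℂ)) = 0 :=
  stmt_19_general a hper F hF α hzero
end
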